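/- Fix d ≥ 1, an integer L ≥ 2, β > 1, integers k > ℓ ≥ 1 with γ = 2^{−k} and δ = ℓ/k, and an integer 0 ≤ N_p ≤ 2^{dk}L^d; set m = 2N_p/(2^{dk}L^d) − 1. Let σ* : T_L → [−1,1] be measurable with L^{−d}∫_{T_L}σ*(r)dr = m, F(σ*) = inf{ F(σ) : σ : T_L → [−1,1] measurable, L^{−d}∫_{T_L}σ(r)dr = m }, and assume σ* is Lipschitz with Lipschitz constant Λ. Then there is a constant c > 0, depending only on d, β, J and Λ, such that for every nonempty family 𝒜 of coarse-grained configurations σ_δ ∈ Ω^{(δ)}_{L,γ} with L^{−d}∫_{T_L}σ_δ(r)dr = m, | γ^d · log P_{can,N_p}( ∪_{σ_δ∈𝒜} E(σ_δ) ) + inf_{σ ∈ 𝒜} β ( F(σ) − F(σ*) ) | ≤ c · L^d (γ^δ + γ^{d(1−δ)}) log(1/γ). -/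

import Mathlib

open MeasureTheory Real

/-- The `d`-dimensional torus `(ℝ/Lℤ)^d` with its Lebesgue (Haar) measure. -/
abbrev Torus (d L : ℕ) := Fin d → AddCircle (L : ℝ)

/-- Geodesic (Euclidean) distance on the torus. -/
noncomputable def torusDist {d L : ℕ} (x y : Torus d L) : ℝ :=
  Real.sqrt (∑ i, (dist (x i) (y i)) ^ 2)

/-- The entropy function `i`. (`Real.log 0 = 0` gives the convention `0 · log 0 = 0`.) -/
noncomputable def ient (m : ℝ) : ℝ :=
  (1 - m) / 2 * Real.log ((1 - m) / 2) + (1 + m) / 2 * Real.log ((1 + m) / 2)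

/-- The hypotheses on the Kac interaction potential `J : [0,∞) → ℝ`: nonnegative, bounded,
continuous, supported in `[0,1]`, smooth and strictly decreasing on `[0,1]`, and normalized
so that `∫_{ℝ^d} J(|r|) dr = 1`. -/
structure KacPotential (d : ℕ) (J : ℝ → ℝ) : Prop where
  nonneg : ∀ r, 0 ≤ J r
  bounded : ∃ M, ∀ r, |J r| ≤ M
  continuous : Continuous J
  support : ∀ r, 1 < r → J r = 0
  strictAnti : StrictAntiOn J (Set.Icc 0 1)
  smooth : ContDiffOn ℝ (⊤ : ℕ∞) J (Set.Icc 0 1)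
  normalized : (∫ r : EuclideanSpace ℝ (Fin d), J ‖r‖) = 1

/-- The Gates–Penrose–Lebowitz free energy functional
`F(σ) = (1/β)∫ i(σ(x)) dx − (1/2)∫∫ J(|x−y|) σ(x) σ(y) dx dy`. -/
noncomputable def GPL (d L : ℕ) [Fact ((0:ℝ) < L)] (β : ℝ) (J : ℝ → ℝ)
    (σ : Torus d L → ℝ) : ℝ :=
  (1 / β) * (∫ x, ient (σ x))
    - (1 / 2) * ∫ x, ∫ y, J (torusDist x y) * σ x * σ y

open scoped Classical

/-- The representative coordinate in `[0, L)` of a point of the circle `ℝ/Lℤ`. -/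
noncomputable def torusCoord {L : ℕ} [Fact ((0:ℝ) < L)] (x : AddCircle (L:ℝ)) : ℝ :=
  ((AddCircle.equivIco (L:ℝ) 0) x).1

/-- Index of the dyadic cube of side `2^{-n}` (from the partition `Q^{(n)}`) containing `x`. -/
noncomputable def cubeIdx {d : ℕ} (L : ℕ) [Fact ((0:ℝ) < L)] (n : ℕ) (x : Torus d L) :
    Fin d → ℤ := fun i => ⌊torusCoord (x i) * 2 ^ n⌋

/-- The cube of the partition `Q^{(n)}` containing `x`. -/
noncomputable def cubeOf {d : ℕ} (L : ℕ) [Fact ((0:ℝ) < L)] (n : ℕ) (x : Torus d L) :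
    Set (Torus d L) := {y | cubeIdx L n y = cubeIdx L n x}

/-- Coarse graining `π^{(δ)}`: averaging over the cubes of side `2^{-n}` of `Q^{(n)}`. -/
noncomputable def coarse {d : ℕ} (L : ℕ) [Fact ((0:ℝ) < L)] (n : ℕ)
    (f : Torus d L → ℝ) : Torus d L → ℝ :=
  fun x => (∫ y in cubeOf L n x, f y) / (volume (cubeOf L n x)).toReal

/-- The microscopic lattice sites, indexing `γℤ^d ∩ T_L` with `γ = 2^{-k}`. -/
abbrev Site (d L k : ℕ) := Fin d → Fin (2 ^ k * L)

/-- Microscopic spin configurations (`true` = occupied, i.e. spin `+1`). -/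
abbrev ConfigSpace (d L k : ℕ) := Site d L k → Bool

/-- The spin value (`±1`) of a site. -/
def spin (b : Bool) : ℝ := if b then 1 else -1

/-- The position in the torus of a lattice site. -/
noncomputable def sitePos {d : ℕ} (L k : ℕ) (p : Site d L k) : Torus d L :=
  fun i => (((p i : ℝ) * (2:ℝ) ^ (-(k:ℤ)) : ℝ) : AddCircle (L:ℝ))

/-- The lattice site whose fine cube (of side `2^{-k}`) contains the point `x` of the torus. -/
noncomputable def siteOf {d : ℕ} (L k : ℕ) [Fact ((0:ℝ) < L)] (x : Torus d L) : Site d L k :=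
  fun i => ⟨(⌊torusCoord (x i) * 2 ^ k⌋).toNat % (2 ^ k * L),
    Nat.mod_lt _ (Nat.mul_pos (pow_pos (by norm_num) k)
      (by have h := (Fact.out : (0:ℝ) < L); exact_mod_cast h))⟩

/-- A microscopic configuration viewed as a `±1`-valued step function on the torus,
constant on each cube of the fine partition `Q^{(k)}`. -/
noncomputable def stepFun {d : ℕ} (L k : ℕ) [Fact ((0:ℝ) < L)]
    (s : ConfigSpace d L k) : Torus d L → ℝ :=
  fun x => spin (s (siteOf L k x))

/-- `γ = 2^{-k}`, the Kac scaling parameter. -/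
noncomputable def gam (k : ℕ) : ℝ := (2:ℝ) ^ (-(k:ℤ))

/-- The Kac Hamiltonian `H_{γ,L}(s) = -(γ^d/2) ∑_{x,y ∈ Λ_{L,γ}} J(|x-y|) s(x) s(y)`. -/
noncomputable def Ham {d : ℕ} (L k : ℕ) (J : ℝ → ℝ) (s : ConfigSpace d L k) : ℝ :=
  -((gam k) ^ d / 2) * ∑ p : Site d L k, ∑ q : Site d L k,
      J (torusDist (sitePos L k p) (sitePos L k q)) * spin (s p) * spin (s q)

/-- The number of occupied sites (sites with spin `+1`) of a configuration. -/
def numOnes {d : ℕ} (L k : ℕ) (s : ConfigSpace d L k) : ℕ :=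
  (Finset.univ.filter fun p => s p = true).card

/-- The canonical Gibbs probability, at inverse temperature `β` and particle number `Np`,
of an event `A` (as an event in `Ω_{L,γ,Np}`). -/
noncomputable def Pcan {d : ℕ} (L k : ℕ) (β : ℝ) (J : ℝ → ℝ) (Np : ℕ)
    (A : Set (ConfigSpace d L k)) : ℝ :=
  (∑ s ∈ Finset.univ.filter
      (fun s : ConfigSpace d L k => s ∈ A ∧ numOnes L k s = Np),
      Real.exp (-β * Ham L k J s)) /
  (∑ s ∈ Finset.univ.filter (fun s : ConfigSpace d L k => numOnes L k s = Np),
      Real.exp (-β * Ham L k J s))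

/-- The lift of a function on the torus to a (periodic) function on `ℝ^d`. -/
noncomputable def liftTorus {d L : ℕ} (φ : Torus d L → ℝ) : EuclideanSpace ℝ (Fin d) → ℝ :=
  fun v => φ (fun i => ((v i : ℝ) : AddCircle (L:ℝ)))


section PartA

variable {d L : ℕ} [hLF : Fact ((0:ℝ) < L)]

lemma tc_nonneg (x : AddCircle (L:ℝ)) : 0 ≤ torusCoord x :=
  ((AddCircle.equivIco (L:ℝ) 0) x).2.1

lemma tc_lt (x : AddCircle (L:ℝ)) : torusCoord x < L := by
  have := ((AddCircle.equivIco (L:ℝ) 0) x).2.2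
  simpa [torusCoord] using this

lemma tc_coe (x : AddCircle (L:ℝ)) : ((torusCoord x : ℝ) : AddCircle (L:ℝ)) = x :=
  AddCircle.coe_equivIco

lemma tc_of_mem {r : ℝ} (h0 : 0 ≤ r) (h1 : r < L) :
    torusCoord ((r : ℝ) : AddCircle (L:ℝ)) = r :=
  AddCircle.equivIco_coe_of_mem (p := (L:ℝ)) (a := 0) ⟨h0, by simpa using h1⟩

lemma tc_meas : Measurable (torusCoord : AddCircle (L:ℝ) → ℝ) :=
  measurable_subtype_coe.comp (AddCircle.measurableEquivIco (L:ℝ) 0).measurable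

lemma floor_nonneg' (k : ℕ) (x : AddCircle (L:ℝ)) : 0 ≤ ⌊torusCoord x * 2 ^ k⌋ :=
  Int.floor_nonneg.2 (mul_nonneg (tc_nonneg x) (by positivity))

lemma floor_lt' (k : ℕ) (x : AddCircle (L:ℝ)) : ⌊torusCoord x * 2 ^ k⌋ < ((2 ^ k * L : ℕ) : ℤ) := by
  rw [Int.floor_lt]
  push_cast
  have := tc_lt x
  have h2 : (0:ℝ) < 2 ^ k := by positivity
  nlinarith

lemma siteOf_val (k : ℕ) (x : Torus d L) (i : Fin d) :
    (((siteOf L k x i : Fin _) : ℕ) : ℤ) = ⌊torusCoord (x i) * 2 ^ k⌋ := by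
  have h0 := floor_nonneg' k (x i)
  have h1 := floor_lt' k (x i)
  simp only [siteOf]
  rw [Nat.mod_eq_of_lt (by omega)]
  omega

lemma siteOf_eq_iff (k : ℕ) (x : Torus d L) (p : Site d L k) :
    siteOf L k x = p ↔ ∀ i, ⌊torusCoord (x i) * 2 ^ k⌋ = ((p i : ℕ) : ℤ) := by
  constructor
  · rintro rfl i
    rw [siteOf_val]
  · intro h
    funext i
    apply Fin.ext
    have := siteOf_val k x i
    rw [h i] at this
    exact_mod_cast this

lemma cubeOf_eq (n : ℕ) (x : Torus d L) : cubeOf L n x = {y | siteOf L n y = siteOf L n x} := by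
  ext y
  simp only [cubeOf, Set.mem_ofPred_eq, siteOf_eq_iff, siteOf_val]
  exact funext_iff

lemma siteOf_meas (k : ℕ) : Measurable (siteOf (d := d) L k) := by
  refine measurable_to_countable' fun p => ?_
  have : siteOf (d := d) L k ⁻¹' {p} =
      ⋂ i, {x : Torus d L | ⌊torusCoord (x i) * 2 ^ k⌋ = ((p i : ℕ) : ℤ)} := by
    ext x; simp [siteOf_eq_iff]
  rw [this]
  refine MeasurableSet.iInter fun i => ?_
  have : Measurable (fun x : Torus d L => ⌊torusCoord (x i) * 2 ^ k⌋) :=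
    Int.measurable_floor.comp ((tc_meas.comp (measurable_pi_apply i)).mul_const _)
  exact this (measurableSet_singleton _)

lemma vol_one (k : ℕ) (j : ℕ) (hj : j < 2 ^ k * L) :
    volume {x : AddCircle (L:ℝ) | ⌊torusCoord x * 2 ^ k⌋ = (j : ℤ)} = ENNReal.ofReal (gam k) := by
  have hm : MeasurableSet {x : AddCircle (L:ℝ) | ⌊torusCoord x * 2 ^ k⌋ = (j : ℤ)} := by
    have : Measurable (fun x : AddCircle (L:ℝ) => ⌊torusCoord x * 2 ^ k⌋) :=
      Int.measurable_floor.comp (tc_meas.mul_const _)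
    exact this (measurableSet_singleton _)
  have hL : (0:ℝ) < L := hLF.out
  have h2 : (0:ℝ) < 2 ^ k := by positivity
  have hjL : (j:ℝ) + 1 ≤ 2 ^ k * L := by exact_mod_cast hj
  rw [AddCircle.add_projection_respects_measure (L:ℝ) 0 hm]
  have hae : (QuotientAddGroup.mk ⁻¹' {x : AddCircle (L:ℝ) | ⌊torusCoord x * 2 ^ k⌋ = (j : ℤ)} ∩
      Set.Ioc 0 (0 + (L:ℝ)) : Set ℝ) =ᵐ[volume]
      Set.Ico ((j:ℝ) / 2 ^ k) (((j:ℝ) + 1) / 2 ^ k) := by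
    have h0 : ∀ᵐ x : ℝ, x ≠ 0 := by simp [ae_iff]
    have h1 : ∀ᵐ x : ℝ, x ≠ L := by simp [ae_iff]
    filter_upwards [h0, h1] with x hx0 hx1
    apply propext
    change (⌊torusCoord ((x:ℝ) : AddCircle (L:ℝ)) * 2 ^ k⌋ = (j : ℤ) ∧ (0 < x ∧ x ≤ 0 + (L:ℝ))) ↔
      ((j:ℝ) / 2 ^ k ≤ x ∧ x < ((j:ℝ) + 1) / 2 ^ k)
    rw [div_le_iff₀ h2, lt_div_iff₀ h2]
    constructor
    · rintro ⟨h, h3, h4⟩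
      rw [tc_of_mem h3.le (lt_of_le_of_ne (by simpa using h4) hx1), Int.floor_eq_iff] at h
      exact_mod_cast h
    · rintro ⟨h3, h4⟩
      have hx : 0 ≤ x := by
        by_contra hneg
        have : x * 2 ^ k < 0 := mul_neg_of_neg_of_pos (not_le.1 hneg) h2
        have : (0:ℝ) ≤ j := Nat.cast_nonneg j
        linarith
      have hxL : x < L := by
        have : x * 2 ^ k < L * 2 ^ k := by linarith
        exact lt_of_mul_lt_mul_right this h2.le
      refine ⟨?_, lt_of_le_of_ne hx (Ne.symm hx0), by linarith⟩
      rw [tc_of_mem hx hxL, Int.floor_eq_iff]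
      exact ⟨by exact_mod_cast h3, by exact_mod_cast h4⟩
  rw [measure_congr hae, Real.volume_Ico]
  congr 1
  rw [gam, zpow_neg, zpow_natCast]
  field_simp
  ring

lemma gam_pos (k : ℕ) : 0 < gam k := by unfold gam; positivity

lemma vol_site (k : ℕ) (p : Site d L k) :
    volume.real {x : Torus d L | siteOf L k x = p} = gam k ^ d := by
  have : {x : Torus d L | siteOf L k x = p} =
      Set.pi Set.univ (fun i => {x : AddCircle (L:ℝ) | ⌊torusCoord x * 2 ^ k⌋ = ((p i : ℕ) : ℤ)}) := by
    ext x; simp [siteOf_eq_iff]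
  rw [this, measureReal_def, volume_pi_pi]
  simp_rw [vol_one k _ (p _).2]
  simp [ENNReal.toReal_ofReal (gam_pos k).le]

lemma siteSet_meas (k : ℕ) (p : Site d L k) :
    MeasurableSet {x : Torus d L | siteOf L k x = p} :=
  siteOf_meas k (measurableSet_singleton p)

lemma siteOf_surj (k : ℕ) (p : Site d L k) : ∃ x : Torus d L, siteOf L k x = p := by
  by_contra h
  push Not at h
  have h1 := vol_site k p
  have : {x : Torus d L | siteOf L k x = p} = ∅ := by
    ext x; simp [h x]
  rw [this] at h1
  simp at h1
  have := pow_pos (gam_pos k) d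
  linarith [h1]

lemma vol_torus : volume.real (Set.univ : Set (Torus d L)) = (L:ℝ) ^ d := by
  rw [measureReal_def, volume_pi, Measure.pi_univ]
  simp

/-- Integrals against functions of the site. -/
lemma integral_site_mul (k : ℕ) (g : Site d L k → ℝ) (f : Torus d L → ℝ) (hf : Integrable f) :
    ∫ x, g (siteOf L k x) * f x = ∑ p, g p * ∫ x in {x | siteOf L k x = p}, f x := by
  have h1 : ∀ x, g (siteOf L k x) * f x =
      ∑ p, g p * Set.indicator {x | siteOf L k x = p} f x := by
    intro x
    rw [Finset.sum_eq_single (siteOf L k x)]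
    · simp
    · intro p _ hp
      simp [Set.indicator, hp.symm]
    · simp
  simp_rw [h1]
  rw [integral_finsetSum]
  · refine Finset.sum_congr rfl fun p _ => ?_
    rw [integral_const_mul, integral_indicator (siteSet_meas k p)]
  · intro p _
    exact (hf.indicator (siteSet_meas k p)).const_mul _

lemma integral_site (k : ℕ) (g : Site d L k → ℝ) :
    ∫ x : Torus d L, g (siteOf L k x) = gam k ^ d * ∑ p, g p := by
  have := integral_site_mul k g (fun _ : Torus d L => (1:ℝ)) (integrable_const _)
  simp only [mul_one] at this
  rw [this, Finset.mul_sum]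
  refine Finset.sum_congr rfl fun p _ => ?_
  rw [setIntegral_const, vol_site]
  simp [mul_comm]

lemma integrable_site (k : ℕ) (g : Site d L k → ℝ) :
    Integrable (fun x : Torus d L => g (siteOf L k x)) := by
  have hm : Measurable (fun x : Torus d L => g (siteOf L k x)) :=
    (measurable_of_countable g).comp (siteOf_meas k)
  refine Integrable.of_bound hm.aestronglyMeasurable (∑ p, |g p|) (Filter.Eventually.of_forall ?_)
  intro x
  exact Finset.single_le_sum (f := fun p => |g p|) (fun p _ => abs_nonneg _) (Finset.mem_univ _)

/-- Coarse index of a fine site. -/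
def cidx {k ℓ : ℕ} (h : ℓ ≤ k) (p : Site d L k) : Site d L ℓ :=
  fun i => ⟨(p i : ℕ) / 2 ^ (k - ℓ), by
    apply Nat.div_lt_of_lt_mul
    have := (p i).2
    rwa [← mul_assoc, ← pow_add, Nat.sub_add_cancel h]⟩

lemma siteOf_cidx {k ℓ : ℕ} (h : ℓ ≤ k) (x : Torus d L) :
    siteOf L ℓ x = cidx h (siteOf L k x) := by
  rw [siteOf_eq_iff]
  intro i
  simp only [cidx]
  push_cast
  rw [siteOf_val]
  have h2 : (2:ℝ) ^ k = 2 ^ ℓ * 2 ^ (k - ℓ) := by rw [← pow_add]; congr 1; omega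
  have h3 : torusCoord (x i) * 2 ^ ℓ = torusCoord (x i) * 2 ^ k / ((2 ^ (k - ℓ) : ℕ) : ℝ) := by
    rw [h2]; push_cast; field_simp
  rw [h3, Int.floor_div_natCast]
  push_cast
  rfl

/-- number of fine sites in a coarse cube -/
lemma fiber_card {k ℓ : ℕ} (h : ℓ ≤ k) (c : Site d L ℓ) :
    (Finset.univ.filter fun p : Site d L k => cidx h p = c).card = 2 ^ (d * (k - ℓ)) := by
  have h1 := integral_site (d := d) (L := L) k (fun p => if cidx h p = c then (1:ℝ) else 0)
  have h2 := integral_site (d := d) (L := L) ℓ (fun p => if p = c then (1:ℝ) else 0)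
  simp_rw [siteOf_cidx h] at h2
  rw [h1] at h2
  simp at h2
  have h3 : gam ℓ = gam k * 2 ^ (k - ℓ) := by
    unfold gam
    rw [← zpow_natCast, ← zpow_add₀ (by norm_num)]
    congr 1
    omega
  rw [h3, mul_pow, ← pow_mul, mul_comm (k - ℓ) d] at h2
  have h4 := mul_left_cancel₀ (pow_pos (gam_pos k) d).ne' h2
  exact_mod_cast h4

lemma torusDist_eq (x y : Torus d L) : torusDist x y =
    dist (WithLp.toLp 2 x : PiLp 2 (fun _ : Fin d => AddCircle (L:ℝ))) (WithLp.toLp 2 y) := by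
  rw [PiLp.dist_eq_of_L2]; rfl

lemma dist_site (k : ℕ) (x : Torus d L) :
    torusDist x (sitePos L k (siteOf L k x)) ≤ d * gam k := by
  have h : ∀ i, dist (x i) (sitePos L k (siteOf L k x) i) ≤ gam k := by
    intro i
    conv_lhs => rw [← tc_coe (x i)]
    simp only [sitePos]
    rw [dist_eq_norm, ← AddCircle.coe_sub]
    refine (QuotientAddGroup.norm_mk_le_norm).trans ?_
    have h1 : (((siteOf L k x i : Fin _) : ℕ) : ℝ) = (⌊torusCoord (x i) * 2 ^ k⌋ : ℝ) := by
      exact_mod_cast siteOf_val k x i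
    rw [h1]
    have h3 := Int.floor_le (torusCoord (x i) * 2 ^ k)
    have h4 := Int.lt_floor_add_one (torusCoord (x i) * 2 ^ k)
    have h5 : (2:ℝ) ^ (-(k:ℤ)) * 2 ^ k = 1 := by
      rw [zpow_neg, zpow_natCast]; field_simp
    have h6 := gam_pos k
    have h7 : torusCoord (x i) = torusCoord (x i) * 2 ^ k * gam k := by
      unfold gam; linear_combination -(torusCoord (x i)) * h5
    rw [Real.norm_eq_abs, abs_le]
    change _ ≤ _ - _ * gam k ∧ _ - _ * gam k ≤ _
    constructor <;> nlinarith
  unfold torusDist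
  have hg := gam_pos k
  refine (Real.sqrt_le_sqrt (Finset.sum_le_sum (g := fun _ => gam k ^ 2) fun i _ => ?_)).trans ?_
  · exact pow_le_pow_left₀ dist_nonneg (h i) 2
  · rw [Real.sqrt_le_left (by positivity)]
    simp only [Finset.sum_const, Finset.card_univ, Fintype.card_fin, nsmul_eq_mul]
    rw [mul_pow]
    apply mul_le_mul_of_nonneg_right _ (by positivity)
    exact_mod_cast Nat.le_self_pow (by norm_num) d

end PartA


section PartB

variable {d L : ℕ} [hLF : Fact ((0:ℝ) < L)]

lemma J_lip {d : ℕ} {J : ℝ → ℝ} (hJ : KacPotential d J) :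
    ∃ K : ℝ, 0 ≤ K ∧ ∀ a b, 0 ≤ a → 0 ≤ b → |J a - J b| ≤ K * |a - b| := by
  have h1 : ContDiffOn ℝ 1 J (Set.Icc 0 1) := hJ.smooth.of_le (by exact_mod_cast le_top)
  obtain ⟨K, hK⟩ := h1.exists_lipschitzOnWith (by norm_num) (convex_Icc 0 1) isCompact_Icc
  have hJ1 : J 1 = 0 := by
    have hc : Filter.Tendsto J (nhdsWithin 1 (Set.Ioi 1)) (nhds (J 1)) :=
      (hJ.continuous.tendsto 1).mono_left nhdsWithin_le_nhds
    have h0 : Filter.Tendsto J (nhdsWithin 1 (Set.Ioi 1)) (nhds 0) := by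
      refine tendsto_const_nhds.congr' ?_
      filter_upwards [self_mem_nhdsWithin] with r hr
      exact (hJ.support r hr).symm
    exact tendsto_nhds_unique hc h0
  have hJg : ∀ r, 1 ≤ r → J r = 0 := by
    intro r hr
    rcases hr.eq_or_lt with h | h
    · rw [← h, hJ1]
    · exact hJ.support r h
  have key : ∀ r, J r = J (min r 1) := by
    intro r
    rcases le_total r 1 with h | h
    · rw [min_eq_left h]
    · rw [min_eq_right h, hJg r h, hJ1]
  refine ⟨K, K.2, fun a b ha hb => ?_⟩
  rw [key a, key b]
  have := hK.dist_le_mul (min a 1) ⟨le_min ha zero_le_one, min_le_right _ _⟩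
    (min b 1) ⟨le_min hb zero_le_one, min_le_right _ _⟩
  rw [Real.dist_eq, Real.dist_eq] at this
  refine this.trans (mul_le_mul_of_nonneg_left ?_ K.2)
  exact abs_min_sub_min_le_max a 1 b 1 |>.trans (by simp)

/-- The interaction energy functional. -/
noncomputable def Qen (J : ℝ → ℝ) (σ : Torus d L → ℝ) : ℝ :=
  ∫ x, ∫ y, J (torusDist x y) * σ x * σ y

/-- The discretized interaction energy. -/
noncomputable def Qd (J : ℝ → ℝ) (n : ℕ) (σ : Torus d L → ℝ) : ℝ :=
  ∫ x, ∫ y, J (torusDist (sitePos L n (siteOf L n x)) (sitePos L n (siteOf L n y))) * σ x * σ y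

lemma torusDist_cont : Continuous (fun z : Torus d L × Torus d L => torusDist z.1 z.2) := by
  unfold torusDist
  fun_prop

lemma torusDist_nonneg (x y : Torus d L) : 0 ≤ torusDist x y := Real.sqrt_nonneg _

lemma torusDist_diff (x y x' y' : Torus d L) :
    |torusDist x y - torusDist x' y'| ≤ torusDist x x' + torusDist y y' := by
  simp only [torusDist_eq]
  rw [← Real.dist_eq]
  exact dist_dist_dist_le _ _ _ _

lemma kernel_compare (κ₁ κ₂ : Torus d L → Torus d L → ℝ) (M ε R : ℝ) (hε : 0 ≤ ε) (hR : 0 ≤ R)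
    (h1 : Measurable (Function.uncurry κ₁)) (h2 : Measurable (Function.uncurry κ₂))
    (b1 : ∀ x y, |κ₁ x y| ≤ M) (b2 : ∀ x y, |κ₂ x y| ≤ M)
    (hd : ∀ x y, |κ₁ x y - κ₂ x y| ≤ ε) (hs : ∀ x y, R < torusDist x y → κ₁ x y - κ₂ x y = 0)
    (σ : Torus d L → ℝ) (hσ : Measurable σ) (hb : ∀ x, |σ x| ≤ 1) :
    |(∫ x, ∫ y, κ₁ x y * σ x * σ y) - ∫ x, ∫ y, κ₂ x y * σ x * σ y| ≤
      (ε * (2 * R) ^ d) * (L:ℝ) ^ d := by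
  have gen : ∀ κ : Torus d L → Torus d L → ℝ, Measurable (Function.uncurry κ) →
      (∀ x y, |κ x y| ≤ M) →
      (∀ x, Integrable (fun y => κ x y * σ x * σ y)) ∧
      Integrable (fun x => ∫ y, κ x y * σ x * σ y) := by
    intro κ hκ bκ
    have hmeas : Measurable (fun z : Torus d L × Torus d L => κ z.1 z.2 * σ z.1 * σ z.2) :=
      (hκ.mul (hσ.comp measurable_fst)).mul (hσ.comp measurable_snd)
    have hbound : ∀ x y, ‖κ x y * σ x * σ y‖ ≤ M := by
      intro x y
      rw [Real.norm_eq_abs, abs_mul, abs_mul]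
      have hM : 0 ≤ M := (abs_nonneg _).trans (bκ x y)
      calc |κ x y| * |σ x| * |σ y| ≤ M * 1 * 1 := by
            gcongr
            · exact bκ x y
            · exact hb x
            · exact hb y
        _ = M := by ring
    constructor
    · intro x
      refine Integrable.of_bound (C := M) ?_ (Filter.Eventually.of_forall (hbound x))
      exact (hmeas.comp measurable_prodMk_left).aestronglyMeasurable
    · refine Integrable.of_bound (C := M * volume.real (Set.univ : Set (Torus d L))) ?_
        (Filter.Eventually.of_forall fun x => ?_)
      · exact (hmeas.stronglyMeasurable.integral_prod_right').aestronglyMeasurable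
      · exact norm_integral_le_of_norm_le_const (Filter.Eventually.of_forall (hbound x))
  obtain ⟨i1, j1⟩ := gen κ₁ h1 b1
  obtain ⟨i2, j2⟩ := gen κ₂ h2 b2
  rw [← integral_sub j1 j2, ← Real.norm_eq_abs, ← vol_torus]
  apply norm_integral_le_of_norm_le_const
  refine Filter.Eventually.of_forall fun x => ?_
  rw [← integral_sub (i1 x) (i2 x)]
  have hball : volume.real (Metric.closedBall x R) ≤ (2 * R) ^ d := by
    rw [measureReal_def, closedBall_pi _ hR, volume_pi_pi]
    simp_rw [AddCircle.volume_closedBall]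
    simp only [Finset.prod_const, Finset.card_univ, Fintype.card_fin, ENNReal.toReal_pow]
    apply pow_le_pow_left₀ ENNReal.toReal_nonneg
    rw [ENNReal.toReal_ofReal]
    · exact min_le_right _ _
    · exact le_min (Nat.cast_nonneg _) (by positivity)
  have hI : Integrable (Set.indicator (Metric.closedBall x R) (fun _ => ε)) :=
    (integrable_const ε).indicator Metric.isClosed_closedBall.measurableSet
  calc ‖∫ y, (κ₁ x y * σ x * σ y - κ₂ x y * σ x * σ y)‖
      ≤ ∫ y, Set.indicator (Metric.closedBall x R) (fun _ => ε) y := by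
        refine norm_integral_le_of_norm_le hI (Filter.Eventually.of_forall fun y => ?_)
        rw [Real.norm_eq_abs]
        by_cases hy : y ∈ Metric.closedBall x R
        · rw [Set.indicator_of_mem hy]
          have : κ₁ x y * σ x * σ y - κ₂ x y * σ x * σ y = (κ₁ x y - κ₂ x y) * σ x * σ y := by ring
          rw [this, abs_mul, abs_mul]
          calc |κ₁ x y - κ₂ x y| * |σ x| * |σ y| ≤ ε * 1 * 1 := by
                gcongr
                · exact hd x y
                · exact hb x
                · exact hb y
            _ = ε := by ring
        · rw [Set.indicator_of_notMem hy]
          have hlt : R < torusDist x y := by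
            rw [Metric.mem_closedBall, not_le] at hy
            refine hy.trans_le ?_
            rw [dist_pi_le_iff (torusDist_nonneg _ _)]
            intro i
            rw [dist_comm]
            unfold torusDist
            apply Real.le_sqrt_of_sq_le
            exact Finset.single_le_sum (f := fun i => dist (x i) (y i) ^ 2)
              (fun _ _ => by positivity) (Finset.mem_univ i)
          have : κ₁ x y * σ x * σ y - κ₂ x y * σ x * σ y = (κ₁ x y - κ₂ x y) * σ x * σ y := by ring
          rw [this, hs x y hlt]
          simp
    _ = volume.real (Metric.closedBall x R) * ε := by
        rw [integral_indicator Metric.isClosed_closedBall.measurableSet, setIntegral_const]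
        simp
    _ ≤ ε * (2 * R) ^ d := by
        rw [mul_comm]
        exact mul_le_mul_of_nonneg_left hball hε

lemma gam_le_one (k : ℕ) : gam k ≤ 1 := by
  unfold gam
  rw [zpow_neg, zpow_natCast]
  exact inv_le_one_of_one_le₀ (one_le_pow₀ (by norm_num))

lemma measurable_site_pair (n : ℕ) (G : Site d L n → Site d L n → ℝ) :
    Measurable (Function.uncurry (fun x y : Torus d L => G (siteOf L n x) (siteOf L n y))) := by
  have hz : Measurable (Function.uncurry G) := measurable_of_countable _
  have hw : Measurable (fun z : Torus d L × Torus d L => (siteOf L n z.1, siteOf L n z.2)) :=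
    ((siteOf_meas n).comp measurable_fst).prodMk ((siteOf_meas n).comp measurable_snd)
  exact hz.comp hw

lemma Qd_compare {d : ℕ} {J : ℝ → ℝ} (hJ : KacPotential d J) :
    ∃ C : ℝ, 0 ≤ C ∧ ∀ (L : ℕ) [Fact ((0:ℝ) < L)] (n : ℕ) (σ : Torus d L → ℝ), Measurable σ →
      (∀ x, |σ x| ≤ 1) → |Qen J σ - Qd J n σ| ≤ C * (L:ℝ) ^ d * gam n := by
  obtain ⟨K, hK0, hK⟩ := J_lip hJ
  obtain ⟨M, hM⟩ := hJ.bounded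
  refine ⟨K * (2 * d) * (2 * (1 + 2 * d)) ^ d, by positivity, ?_⟩
  intro L _ n σ hσ hb
  have hg := gam_pos n
  have hg1 := gam_le_one n
  have hdist : ∀ x y : Torus d L, |torusDist x y -
      torusDist (sitePos L n (siteOf L n x)) (sitePos L n (siteOf L n y))| ≤ 2 * d * gam n := by
    intro x y
    refine (torusDist_diff _ _ _ _).trans ?_
    have h1 := dist_site n x
    have h2 := dist_site n y
    linarith
  have hdd : (0:ℝ) ≤ d := Nat.cast_nonneg d
  have hm1 : Measurable (Function.uncurry (fun x y : Torus d L => J (torusDist x y))) :=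
    (hJ.continuous.comp torusDist_cont).measurable
  have hm2 : Measurable (Function.uncurry (fun x y : Torus d L =>
      J (torusDist (sitePos L n (siteOf L n x)) (sitePos L n (siteOf L n y))))) := by
    exact measurable_site_pair n (fun p q => J (torusDist (sitePos L n p) (sitePos L n q)))
  have h3 : ∀ x y : Torus d L, |J (torusDist x y) -
      J (torusDist (sitePos L n (siteOf L n x)) (sitePos L n (siteOf L n y)))| ≤
      K * (2 * d * gam n) := fun x y =>
    (hK _ _ (torusDist_nonneg _ _) (torusDist_nonneg _ _)).trans
      (mul_le_mul_of_nonneg_left (hdist x y) hK0)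
  have h4 : ∀ x y : Torus d L, (1 + 2 * (d:ℝ)) < torusDist x y → J (torusDist x y) -
      J (torusDist (sitePos L n (siteOf L n x)) (sitePos L n (siteOf L n y))) = 0 := by
    intro x y hxy
    have h1 := (abs_le.1 (hdist x y)).2
    have h2 : 2 * d * gam n ≤ 2 * d := by nlinarith
    have h3 : 1 < torusDist x y := by linarith
    have h4 : 1 < torusDist (sitePos L n (siteOf L n x)) (sitePos L n (siteOf L n y)) := by
      linarith
    rw [hJ.support _ h3, hJ.support _ h4, sub_zero]
  have := kernel_compare _ _
    M (K * (2 * d * gam n)) (1 + 2 * d) (by positivity) (by positivity) hm1 hm2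
    (fun x y => hM _) (fun x y => hM _) h3 h4 σ hσ hb
  calc |Qen J σ - Qd J n σ| ≤ _ := this
    _ = _ := by ring

lemma Qd_eq_sum (J : ℝ → ℝ) (n : ℕ) (σ : Torus d L → ℝ) (hσ : Integrable σ) :
    Qd J n σ = ∑ p : Site d L n, ∑ q : Site d L n,
      J (torusDist (sitePos L n p) (sitePos L n q)) *
        (∫ x in {x | siteOf L n x = p}, σ x) * ∫ x in {x | siteOf L n x = q}, σ x := by
  unfold Qd
  have h1 : ∀ x : Torus d L, ∫ y, J (torusDist (sitePos L n (siteOf L n x))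
      (sitePos L n (siteOf L n y))) * σ x * σ y =
      (∑ q, J (torusDist (sitePos L n (siteOf L n x)) (sitePos L n q)) *
        ∫ y in {y | siteOf L n y = q}, σ y) * σ x := by
    intro x
    have := integral_site_mul n (fun q => J (torusDist (sitePos L n (siteOf L n x))
      (sitePos L n q))) σ hσ
    rw [← this, ← integral_mul_const]
    congr 1
    funext y
    ring
  simp_rw [h1]
  rw [integral_site_mul n (fun p => ∑ q, J (torusDist (sitePos L n p) (sitePos L n q)) *
        ∫ y in {y | siteOf L n y = q}, σ y) σ hσ]
  refine Finset.sum_congr rfl fun p _ => ?_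
  rw [Finset.sum_mul]
  refine Finset.sum_congr rfl fun q _ => ?_
  ring

/-- the cell average of `f`. -/
noncomputable def cellAvg (n : ℕ) (f : Torus d L → ℝ) (c : Site d L n) : ℝ :=
  (∫ y in {y | siteOf L n y = c}, f y) / gam n ^ d

lemma coarse_eq (n : ℕ) (f : Torus d L → ℝ) (x : Torus d L) :
    coarse L n f x = cellAvg n f (siteOf L n x) := by
  unfold coarse cellAvg
  rw [cubeOf_eq, ← measureReal_def, vol_site]

lemma setInt_site (n : ℕ) (g : Site d L n → ℝ) (c : Site d L n) :
    ∫ x in {x : Torus d L | siteOf L n x = c}, g (siteOf L n x) = gam n ^ d * g c := by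
  rw [setIntegral_congr_fun (g := fun _ => g c) (siteSet_meas n c)]
  · rw [setIntegral_const, vol_site]; simp
  · intro x hx
    have : siteOf L n x = c := hx
    simp [this]

lemma setInt_coarse (n : ℕ) (f : Torus d L → ℝ) (c : Site d L n) :
    ∫ x in {x : Torus d L | siteOf L n x = c}, coarse L n f x =
      ∫ x in {x : Torus d L | siteOf L n x = c}, f x := by
  simp_rw [coarse_eq]
  rw [setInt_site, cellAvg]
  have := (pow_pos (gam_pos n) d).ne'
  field_simp

lemma coarse_meas (n : ℕ) (f : Torus d L → ℝ) : Measurable (coarse L n f) := by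
  have : coarse L n f = fun x => cellAvg n f (siteOf L n x) := funext fun x => coarse_eq n f x
  rw [this]
  exact (measurable_of_countable (cellAvg n f)).comp (siteOf_meas n)

lemma int_of_bdd (σ : Torus d L → ℝ) (hσ : Measurable σ) (hb : ∀ x, |σ x| ≤ 1) :
    Integrable σ :=
  Integrable.of_bound hσ.aestronglyMeasurable 1 (Filter.Eventually.of_forall hb)

lemma cellAvg_bdd (n : ℕ) (σ : Torus d L → ℝ) (hb : ∀ x, |σ x| ≤ 1) (c : Site d L n) :
    |cellAvg n σ c| ≤ 1 := by
  have hg := pow_pos (gam_pos n) d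
  unfold cellAvg
  rw [abs_div, abs_of_pos hg, div_le_one hg]
  have := norm_setIntegral_le_of_norm_le_const (μ := volume)
    (s := {x : Torus d L | siteOf L n x = c}) (f := σ) (C := 1) (measure_lt_top _ _)
    (fun x _ => hb x)
  rwa [vol_site, one_mul] at this

lemma coarse_bdd (n : ℕ) (σ : Torus d L → ℝ) (hb : ∀ x, |σ x| ≤ 1) (x : Torus d L) :
    |coarse L n σ x| ≤ 1 := by
  rw [coarse_eq]; exact cellAvg_bdd n σ hb _

lemma Qd_coarse (J : ℝ → ℝ) (n : ℕ) (σ : Torus d L → ℝ) (hσ : Measurable σ)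
    (hb : ∀ x, |σ x| ≤ 1) : Qd J n (coarse L n σ) = Qd J n σ := by
  rw [Qd_eq_sum J n σ (int_of_bdd σ hσ hb),
    Qd_eq_sum J n _ (int_of_bdd _ (coarse_meas n σ) (coarse_bdd n σ hb))]
  simp_rw [setInt_coarse]

lemma spin_abs (b : Bool) : |spin b| ≤ 1 := by cases b <;> simp [spin]

lemma step_meas (k : ℕ) (s : ConfigSpace d L k) : Measurable (stepFun L k s) :=
  (measurable_of_countable (fun p => spin (s p))).comp (siteOf_meas k)

lemma step_bdd (k : ℕ) (s : ConfigSpace d L k) (x : Torus d L) : |stepFun L k s x| ≤ 1 :=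
  spin_abs _

lemma Qd_step (J : ℝ → ℝ) (k : ℕ) (s : ConfigSpace d L k) :
    Qd J k (stepFun L k s) = -2 * (gam k ^ d * Ham L k J s) := by
  rw [Qd_eq_sum J k _ (int_of_bdd _ (step_meas k s) (step_bdd k s))]
  unfold stepFun
  simp_rw [fun c => setInt_site (d := d) (L := L) k (fun p => spin (s p)) c]
  unfold Ham
  rw [← mul_assoc, ← mul_assoc, ]
  simp_rw [Finset.mul_sum]
  refine Finset.sum_congr rfl fun p _ => Finset.sum_congr rfl fun q _ => ?_
  ring

end PartB


section PartC

lemma logfact_lower (n : ℕ) : (n:ℝ) * Real.log n - n ≤ Real.log (n.factorial) := by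
  induction n with
  | zero => simp
  | succ n ih =>
    rw [Nat.factorial_succ]
    push_cast
    have h1 : (0:ℝ) < (n:ℝ) + 1 := by positivity
    have h2 : (0:ℝ) < (n.factorial : ℝ) := by exact_mod_cast n.factorial_pos
    rw [Real.log_mul h1.ne' h2.ne']
    rcases Nat.eq_zero_or_pos n with h | h
    · subst h; simp
    · have hn : (0:ℝ) < n := by exact_mod_cast h
      have h3 : Real.log (((n:ℝ) + 1) / n) ≤ ((n:ℝ) + 1) / n - 1 :=
        Real.log_le_sub_one_of_pos (by positivity)
      rw [Real.log_div h1.ne' hn.ne'] at h3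
      have h4 : ((n:ℝ) + 1) / n - 1 = 1 / n := by field_simp; ring
      rw [h4, le_div_iff₀ hn] at h3
      nlinarith

lemma logfact_upper (n : ℕ) :
    Real.log (n.factorial) ≤ (n:ℝ) * Real.log n - n + (1 + Real.log (n + 1)) := by
  have key : ∀ n : ℕ, Real.log ((n+1).factorial) ≤
      ((n:ℝ) + 1) * Real.log (n + 1) - (n + 1) + (1 + Real.log (n + 1)) := by
    intro n
    induction n with
    | zero => simp
    | succ n ih =>
      rw [Nat.factorial_succ]
      push_cast
      push_cast at ih
      have h0 : (0:ℝ) < (n:ℝ) + 1 := by positivity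
      have h1 : (0:ℝ) < (n:ℝ) + 1 + 1 := by positivity
      have h2 : (0:ℝ) < ((n+1).factorial : ℝ) := by exact_mod_cast (n+1).factorial_pos
      rw [Real.log_mul h1.ne' h2.ne']
      have h3 : Real.log (((n:ℝ) + 1) / (n + 1 + 1)) ≤ ((n:ℝ) + 1) / (n + 1 + 1) - 1 :=
        Real.log_le_sub_one_of_pos (by positivity)
      rw [Real.log_div h0.ne' h1.ne'] at h3
      have h4 : ((n:ℝ) + 1) / (n + 1 + 1) - 1 = (-1) / (n + 1 + 1) := by field_simp; ring
      rw [h4, le_div_iff₀ h1] at h3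
      nlinarith
  rcases n with _ | n
  · simp
  · refine (key n).trans ?_
    push_cast
    have : Real.log ((n:ℝ) + 1) ≤ Real.log ((n:ℝ) + 1 + 1) :=
      Real.log_le_log (by positivity) (by linarith)
    linarith

lemma ient_ratio (n j : ℕ) (hn : 0 < n) (hj : j ≤ n) :
    (n:ℝ) * ient ((2 * (j:ℝ) - n) / n) = ((n - j : ℕ):ℝ) * Real.log ((n - j : ℕ):ℝ) +
      j * Real.log j - n * Real.log n := by
  have hn' : (0:ℝ) < n := by exact_mod_cast hn
  have h1 : (1 - (2 * (j:ℝ) - n) / n) / 2 = ((n - j : ℕ):ℝ) / n := by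
    rw [Nat.cast_sub hj]; field_simp; ring
  have h2 : (1 + (2 * (j:ℝ) - n) / n) / 2 = (j:ℝ) / n := by
    field_simp; ring
  have h3 : ∀ a : ℝ, 0 ≤ a → (n:ℝ) * (a / n * Real.log (a / n)) = a * Real.log a - a * Real.log n := by
    intro a ha
    rcases ha.eq_or_lt with h | h
    · subst h; simp
    · rw [Real.log_div h.ne' hn'.ne']; field_simp
  unfold ient
  rw [h1, h2, mul_add, h3 _ (Nat.cast_nonneg _), h3 _ (Nat.cast_nonneg _), Nat.cast_sub hj]
  ring

lemma log_choose (n j : ℕ) (hn : 0 < n) (hj : j ≤ n) :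
    |Real.log (n.choose j) + n * ient ((2 * (j:ℝ) - n) / n)| ≤ 2 * (1 + Real.log (n + 1)) := by
  rw [ient_ratio n j hn hj]
  have hch : Real.log (n.choose j) = Real.log n.factorial - Real.log j.factorial
      - Real.log (n - j).factorial := by
    have h := Nat.choose_mul_factorial_mul_factorial hj
    have h' : ((n.choose j : ℕ):ℝ) * (j.factorial : ℝ) * ((n - j).factorial : ℝ) = n.factorial := by
      exact_mod_cast h
    have p1 : ((n.choose j : ℕ):ℝ) ≠ 0 := by exact_mod_cast (Nat.choose_pos hj).ne'
    have p2 : (j.factorial : ℝ) ≠ 0 := by exact_mod_cast j.factorial_ne_zero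
    have p3 : ((n-j).factorial : ℝ) ≠ 0 := by exact_mod_cast (n-j).factorial_ne_zero
    rw [← h', Real.log_mul (mul_ne_zero p1 p2) p3, Real.log_mul p1 p2]
    ring
  rw [hch]
  have l1 := logfact_lower n
  have u1 := logfact_upper n
  have l2 := logfact_lower j
  have u2 := logfact_upper j
  have l3 := logfact_lower (n - j)
  have u3 := logfact_upper (n - j)
  have m2 : Real.log ((j:ℝ) + 1) ≤ Real.log (n + 1) :=
    Real.log_le_log (by positivity) (by have : (j:ℝ) ≤ n := by exact_mod_cast hj
                                        linarith)
  have m3 : Real.log (((n - j : ℕ):ℝ) + 1) ≤ Real.log (n + 1) :=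
    Real.log_le_log (by positivity) (by have : ((n - j : ℕ):ℝ) ≤ n := by exact_mod_cast Nat.sub_le n j
                                        linarith)
  have m4 : 0 ≤ Real.log ((n:ℝ) + 1) := Real.log_nonneg (by have : (0:ℝ) ≤ n := Nat.cast_nonneg n
                                                            linarith)
  have hs : ((n - j : ℕ):ℝ) = (n:ℝ) - j := Nat.cast_sub hj
  rw [abs_le]
  constructor <;> linarith

lemma xlogx_mod (n j : ℕ) (hn : 0 < n) (hj : j ≤ n) (a : ℝ) (ha0 : 0 ≤ a) (ha1 : a ≤ 1)
    (h : |(j:ℝ) / n - a| ≤ 1 / n) :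
    (j:ℝ) / n * Real.log ((j:ℝ) / n) ≤ a * Real.log a + (1 + Real.log n) / n := by
  have hn' : (0:ℝ) < n := by exact_mod_cast hn
  have hn1 : (1:ℝ) ≤ n := by exact_mod_cast hn
  have hlog : 0 ≤ Real.log n := Real.log_nonneg hn1
  have hpos : 0 ≤ (1 + Real.log n) / n := by positivity
  rcases Nat.eq_zero_or_pos j with hj0 | hj0
  · subst hj0
    simp only [Nat.cast_zero, zero_div, zero_mul, zero_sub, abs_neg] at h ⊢
    rcases ha0.eq_or_lt with h0 | h0
    · subst h0; simpa using hpos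
    · rw [abs_of_pos h0] at h
      have h3 : Real.log (1 / (n * a)) ≤ 1 / (n * a) - 1 :=
        Real.log_le_sub_one_of_pos (by positivity)
      rw [one_div, Real.log_inv, Real.log_mul hn'.ne' h0.ne'] at h3
      have h4 : a * (-(Real.log n + Real.log a)) ≤ a * ((↑n * a)⁻¹ - 1) :=
        mul_le_mul_of_nonneg_left h3 ha0
      have h5 : a * ((↑n * a)⁻¹ - 1) = 1 / n - a := by field_simp
      have h6 : a * Real.log n ≤ 1 / n * Real.log n := mul_le_mul_of_nonneg_right h hlog
      have h7 : (1 + Real.log n) / n = 1 / n + 1 / n * Real.log n := by ring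
      rw [h7]
      nlinarith
  · have hj' : (0:ℝ) < j := by exact_mod_cast hj0
    have hj1 : (1:ℝ) ≤ j := by exact_mod_cast hj0
    set b : ℝ := (j:ℝ) / n with hb
    have hb0 : 0 < b := by positivity
    have hb1 : b ≤ 1 := by
      rw [hb, div_le_one hn']; exact_mod_cast hj
    have hlb : Real.log b ≤ 0 := Real.log_nonpos hb0.le hb1
    have hlb2 : -Real.log n ≤ Real.log b := by
      rw [hb, Real.log_div hj'.ne' hn'.ne']
      linarith [Real.log_nonneg hj1]
    rcases ha0.eq_or_lt with h0 | h0
    · subst h0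
      have : b * Real.log b ≤ 0 := mul_nonpos_of_nonneg_of_nonpos hb0.le hlb
      simp; linarith
    · have h3 : Real.log (b / a) ≤ b / a - 1 := Real.log_le_sub_one_of_pos (by positivity)
      rw [Real.log_div hb0.ne' h0.ne'] at h3
      have h4 := mul_le_mul_of_nonneg_left h3 ha0
      have h5 : a * (b / a - 1) = b - a := by field_simp
      rw [h5] at h4
      obtain ⟨h6, h7⟩ := abs_le.1 h
      have h8 : (b - a) * Real.log b ≤ 1 / n * Real.log n := by
        have : (b - a) * Real.log b = (a - b) * (-Real.log b) := by ring
        rw [this]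
        exact mul_le_mul (by linarith) (by linarith) (by linarith) (by positivity)
      have h9 : (1 + Real.log n) / n = 1 / n + 1 / n * Real.log n := by ring
      rw [h9]
      nlinarith

lemma ient_mod (n j : ℕ) (hn : 0 < n) (hj : j ≤ n) (t : ℝ) (ht : |t| ≤ 1)
    (h : |(j:ℝ) - n * ((1 + t) / 2)| ≤ 1) :
    ient ((2 * (j:ℝ) - n) / n) ≤ ient t + 2 * ((1 + Real.log n) / n) := by
  have hn' : (0:ℝ) < n := by exact_mod_cast hn
  obtain ⟨t1, t2⟩ := abs_le.1 ht
  have h1 : (1 - (2 * (j:ℝ) - n) / n) / 2 = ((n - j : ℕ):ℝ) / n := by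
    rw [Nat.cast_sub hj]; field_simp; ring
  have h2 : (1 + (2 * (j:ℝ) - n) / n) / 2 = (j:ℝ) / n := by
    field_simp; ring
  unfold ient
  rw [h1, h2]
  have e1 := xlogx_mod n (n - j) hn (Nat.sub_le _ _) ((1 - t) / 2) (by linarith) (by linarith) (by
    rw [Nat.cast_sub hj]
    have : ((n:ℝ) - j) / n - (1 - t) / 2 = -((j:ℝ) - n * ((1 + t) / 2)) / n := by field_simp; ring
    rw [this, abs_div, abs_neg, abs_of_pos hn']
    gcongr)
  have e2 := xlogx_mod n j hn hj ((1 + t) / 2) (by linarith) (by linarith) (by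
    have : (j:ℝ) / n - (1 + t) / 2 = ((j:ℝ) - n * ((1 + t) / 2)) / n := by field_simp
    rw [this, abs_div, abs_of_pos hn']
    gcongr)
  linarith

lemma ient_cont : Continuous ient := by
  have h : ient = fun m => -(Real.negMulLog ((1 - m) / 2) + Real.negMulLog ((1 + m) / 2)) := by
    funext m; simp only [ient, Real.negMulLog]; ring
  rw [h]
  have := Real.continuous_negMulLog
  fun_prop

lemma ient_convex : ConvexOn ℝ (Set.Icc (-1:ℝ) 1) ient := by
  have hc := Real.convexOn_mul_log
  refine ⟨convex_Icc _ _, ?_⟩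
  intro x hx y hy a b ha hb hab
  have e1 := hc.2 (x := (1 - x) / 2) (y := (1 - y) / 2) (by simp; linarith [hx.2])
    (by simp; linarith [hy.2]) ha hb hab
  have e2 := hc.2 (x := (1 + x) / 2) (y := (1 + y) / 2) (by simp; linarith [hx.1])
    (by simp; linarith [hy.1]) ha hb hab
  simp only [smul_eq_mul] at e1 e2 ⊢
  have f1 : (1 - (a * x + b * y)) / 2 = a * ((1 - x) / 2) + b * ((1 - y) / 2) := by
    linear_combination -(1/2) * hab
  have f2 : (1 + (a * x + b * y)) / 2 = a * ((1 + x) / 2) + b * ((1 + y) / 2) := by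
    linear_combination -(1/2) * hab
  unfold ient
  rw [f1, f2]
  linarith

lemma card_class {α β : Type*} [Fintype α] [Fintype β] (f : α → β) (N : β → ℕ) :
    (Finset.univ.filter fun s : α → Bool =>
      ∀ c, (Finset.univ.filter fun p => f p = c ∧ s p = true).card = N c).card =
    ∏ c, ((Finset.univ.filter fun p => f p = c).card).choose (N c) := by
  have : ∀ c, ((Finset.univ.filter fun p => f p = c).card).choose (N c) =
      (Finset.powersetCard (N c) (Finset.univ.filter fun p => f p = c)).card := by
    intro c; rw [Finset.card_powersetCard]
  simp_rw [this]
  rw [← Fintype.card_piFinset]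
  refine Finset.card_nbij' (fun s c => Finset.univ.filter fun p => f p = c ∧ s p = true)
    (fun g p => decide (p ∈ g (f p))) ?_ ?_ ?_ ?_
  · intro s hs
    simp only [Finset.coe_filter, Finset.mem_univ, true_and, Set.mem_ofPred_eq] at hs
    simp only [Fintype.coe_piFinset, Set.mem_pi, Set.mem_univ, forall_const, Finset.mem_coe,
      Finset.mem_powersetCard]
    intro c
    refine ⟨?_, hs c⟩
    intro p hp
    simp only [Finset.mem_filter, Finset.mem_univ, true_and] at hp ⊢
    exact hp.1
  · intro g hg
    simp only [Fintype.coe_piFinset, Set.mem_pi, Set.mem_univ, forall_const, Finset.mem_coe,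
      Finset.mem_powersetCard] at hg
    simp only [Finset.coe_filter, Finset.mem_univ, true_and, Set.mem_ofPred_eq, decide_eq_true_eq]
    intro c
    rw [← (hg c).2]
    congr 1
    ext p
    simp only [Finset.mem_filter, Finset.mem_univ, true_and]
    constructor
    · rintro ⟨rfl, h⟩; exact h
    · intro h
      have := (hg c).1 h
      simp only [Finset.mem_filter, Finset.mem_univ, true_and] at this
      subst this
      exact ⟨rfl, h⟩
  · intro s _
    funext p
    simp
  · intro g hg
    simp only [Fintype.coe_piFinset, Set.mem_pi, Set.mem_univ, forall_const, Finset.mem_coe,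
      Finset.mem_powersetCard] at hg
    funext c
    ext p
    simp only [Finset.mem_filter, Finset.mem_univ, true_and, decide_eq_true_eq]
    constructor
    · rintro ⟨rfl, h⟩; exact h
    · intro h
      have := (hg c).1 h
      simp only [Finset.mem_filter, Finset.mem_univ, true_and] at this
      subst this
      exact ⟨rfl, h⟩

lemma rounding {ι : Type*} (n : ℕ) (f : ι → ℝ) (h0 : ∀ i, 0 ≤ f i) (h1 : ∀ i, f i ≤ n)
    (s : Finset ι) : ∃ g : ι → ℕ, (∀ i ∈ s, g i ≤ n ∧ |(g i : ℝ) - f i| ≤ 1) ∧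
      ((∑ i ∈ s, g i : ℕ) : ℤ) = ⌊∑ i ∈ s, f i⌋ := by
  induction s using Finset.induction_on with
  | empty => exact ⟨fun _ => 0, by simp, by simp⟩
  | insert a s ha ih =>
    obtain ⟨g, hg, hs⟩ := ih
    set S := ∑ i ∈ s, f i with hS
    have hfl : ⌊S⌋ ≤ ⌊f a + S⌋ := Int.floor_le_floor (by linarith [h0 a])
    have hfu : ⌊f a + S⌋ ≤ ⌊S⌋ + n := by
      rw [← Int.floor_add_natCast]
      exact Int.floor_le_floor (by linarith [h1 a])
    refine ⟨Function.update g a (⌊f a + S⌋ - ⌊S⌋).toNat, ?_, ?_⟩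
    · intro i hi
      rcases eq_or_ne i a with h | h
      · subst h
        rw [Function.update_self]
        refine ⟨by omega, ?_⟩
        have hc : (((⌊f i + S⌋ - ⌊S⌋).toNat : ℕ) : ℝ) = (⌊f i + S⌋ : ℝ) - ⌊S⌋ := by
          have : (((⌊f i + S⌋ - ⌊S⌋).toNat : ℕ) : ℤ) = ⌊f i + S⌋ - ⌊S⌋ := by omega
          exact_mod_cast this
        rw [hc, abs_le]
        have a1 := Int.floor_le S
        have a2 := Int.lt_floor_add_one S
        have a3 := Int.floor_le (f i + S)
        have a4 := Int.lt_floor_add_one (f i + S)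
        constructor <;> linarith
      · rw [Function.update_of_ne h]
        exact hg i ((Finset.mem_insert.1 hi).resolve_left h)
    · rw [Finset.sum_insert ha, Finset.sum_insert ha, Function.update_self]
      have : ∑ i ∈ s, Function.update g a (⌊f a + S⌋ - ⌊S⌋).toNat i = ∑ i ∈ s, g i := by
        refine Finset.sum_congr rfl fun i hi => ?_
        rw [Function.update_of_ne]
        rintro rfl; exact ha hi
      rw [this]
      push_cast at hs ⊢
      rw [← hS]
      omega

end PartC


section PartD

lemma family_sum {S T : Type*} [Fintype S] (N : S → T) (w F : S → ℝ) (hw : ∀ s, 0 < w s)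
    (G E b K : ℝ) (hG : 0 < G) (hK : 1 ≤ K)
    (hW : ∀ s₀, |G * Real.log (∑ s ∈ Finset.univ.filter (fun s => N s = N s₀), w s) + F s₀ + b| ≤ E)
    (A : Finset S) (hA : A.Nonempty) (hc : ((A.image N).card : ℝ) ≤ K) :
    |G * Real.log (∑ s ∈ Finset.univ.filter (fun s => ∃ s₀ ∈ A, N s = N s₀), w s)
      + A.inf' hA F + b| ≤ E + G * Real.log K := by
  have hlogK : 0 ≤ G * Real.log K := mul_nonneg hG.le (Real.log_nonneg hK)
  have hpos : ∀ s₀, 0 < ∑ s ∈ Finset.univ.filter (fun s => N s = N s₀), w s := fun s₀ =>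
    Finset.sum_pos (fun s _ => hw s) ⟨s₀, by simp⟩
  obtain ⟨s₁, hs₁, hmin⟩ := Finset.exists_mem_eq_inf' hA F
  have hle : ∑ s ∈ Finset.univ.filter (fun s => N s = N s₁), w s ≤
      ∑ s ∈ Finset.univ.filter (fun s => ∃ s₀ ∈ A, N s = N s₀), w s := by
    refine Finset.sum_le_sum_of_subset_of_nonneg ?_ (fun s _ _ => (hw s).le)
    intro s hs
    simp only [Finset.mem_filter, Finset.mem_univ, true_and] at hs ⊢
    exact ⟨s₁, hs₁, hs⟩
  have hSpos := (hpos s₁).trans_le hle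
  have hup : ∑ s ∈ Finset.univ.filter (fun s => ∃ s₀ ∈ A, N s = N s₀), w s ≤
      K * Real.exp ((E - b - A.inf' hA F) / G) := by
    have h1 : ∑ s ∈ Finset.univ.filter (fun s => ∃ s₀ ∈ A, N s = N s₀), w s =
        ∑ t ∈ A.image N, ∑ s ∈ Finset.univ.filter (fun s => N s = t), w s := by
      rw [← Finset.sum_biUnion]
      · congr 1
        ext s
        simp only [Finset.mem_filter, Finset.mem_univ, true_and, Finset.mem_biUnion,
          Finset.mem_image]
        constructor
        · rintro ⟨s₀, h, h'⟩; exact ⟨N s, ⟨s₀, h, h'.symm⟩, rfl⟩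
        · rintro ⟨t, ⟨s₀, h, h'⟩, h''⟩; exact ⟨s₀, h, by rw [h'', h']⟩
      · intro t _ t' _ htt
        rw [Function.onFun, Finset.disjoint_left]
        intro s hs hs'
        simp only [Finset.mem_filter, Finset.mem_univ, true_and] at hs hs'
        exact htt (hs.symm.trans hs')
    rw [h1]
    have h2 : ∀ t ∈ A.image N, ∑ s ∈ Finset.univ.filter (fun s => N s = t), w s ≤
        Real.exp ((E - b - A.inf' hA F) / G) := by
      intro t ht
      obtain ⟨s₀, hs₀, rfl⟩ := Finset.mem_image.1 ht
      rw [← Real.log_le_iff_le_exp (hpos s₀), le_div_iff₀ hG]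
      have := (abs_le.1 (hW s₀)).2
      have h3 : A.inf' hA F ≤ F s₀ := Finset.inf'_le _ hs₀
      linarith
    refine (Finset.sum_le_card_nsmul _ _ _ h2).trans ?_
    rw [nsmul_eq_mul]
    exact mul_le_mul_of_nonneg_right hc (Real.exp_pos _).le
  rw [abs_le]
  constructor
  · have h1 := Real.log_le_log (hpos s₁) hle
    have h2 := mul_le_mul_of_nonneg_left h1 hG.le
    have h3 := (abs_le.1 (hW s₁)).1
    rw [hmin]
    linarith
  · have h1 := Real.log_le_log hSpos hup
    rw [Real.log_mul (by linarith) (Real.exp_pos _).ne', Real.log_exp] at h1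
    have h2 := mul_le_mul_of_nonneg_left h1 hG.le
    have h3 : G * ((E - b - A.inf' hA F) / G) = E - b - A.inf' hA F := by field_simp
    rw [mul_add, h3] at h2
    linarith

lemma Qen_lip {d : ℕ} {J : ℝ → ℝ} (hJ : KacPotential d J) :
    ∃ C : ℝ, 0 ≤ C ∧ ∀ (L : ℕ) [Fact ((0:ℝ) < L)] (σ τ : Torus d L → ℝ), Measurable σ →
      Measurable τ → (∀ x, |σ x| ≤ 1) → (∀ x, |τ x| ≤ 1) → ∀ ε : ℝ, 0 ≤ ε →
      (∀ x, |σ x - τ x| ≤ ε) → |Qen J σ - Qen J τ| ≤ C * (L:ℝ) ^ d * ε := by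
  obtain ⟨M, hM⟩ := hJ.bounded
  have hM0 : 0 ≤ M := (abs_nonneg _).trans (hM 0)
  refine ⟨M * 2 * (2 * 1) ^ d, by positivity, ?_⟩
  intro L _ σ τ hσ hτ bσ bτ ε hε hd
  have hJm : Measurable (fun z : Torus d L × Torus d L => J (torusDist z.1 z.2)) :=
    (hJ.continuous.comp torusDist_cont).measurable
  have gm : ∀ ρ : Torus d L → ℝ, Measurable ρ →
      Measurable (Function.uncurry (fun x y : Torus d L => J (torusDist x y) * ρ x * ρ y)) :=
    fun ρ hρ => (hJm.mul (hρ.comp measurable_fst)).mul (hρ.comp measurable_snd)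
  have gb : ∀ ρ : Torus d L → ℝ, (∀ x, |ρ x| ≤ 1) →
      ∀ x y : Torus d L, |J (torusDist x y) * ρ x * ρ y| ≤ M := by
    intro ρ hρ x y
    rw [abs_mul, abs_mul]
    calc |J (torusDist x y)| * |ρ x| * |ρ y| ≤ M * 1 * 1 := by
          gcongr
          · exact hM _
          · exact hρ x
          · exact hρ y
      _ = M := by ring
  have hdiff : ∀ x y : Torus d L, |J (torusDist x y) * σ x * σ y - J (torusDist x y) * τ x * τ y| ≤
      M * (2 * ε) := by
    intro x y
    have : J (torusDist x y) * σ x * σ y - J (torusDist x y) * τ x * τ y =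
      J (torusDist x y) * ((σ x - τ x) * σ y + τ x * (σ y - τ y)) := by ring
    rw [this, abs_mul]
    have h1 : |(σ x - τ x) * σ y + τ x * (σ y - τ y)| ≤ 2 * ε := by
      refine (abs_add_le _ _).trans ?_
      rw [abs_mul, abs_mul]
      have e1 : |σ x - τ x| * |σ y| ≤ ε * 1 :=
        mul_le_mul (hd x) (bσ y) (abs_nonneg _) hε
      have e2 : |τ x| * |σ y - τ y| ≤ 1 * ε :=
        mul_le_mul (bτ x) (hd y) (abs_nonneg _) zero_le_one
      linarith
    exact mul_le_mul (hM _) h1 (abs_nonneg _) hM0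
  have hs : ∀ x y : Torus d L, (1:ℝ) < torusDist x y →
      J (torusDist x y) * σ x * σ y - J (torusDist x y) * τ x * τ y = 0 := by
    intro x y h
    rw [hJ.support _ h]; ring
  have := kernel_compare _ _ M (M * (2 * ε)) 1 (by positivity) zero_le_one (gm σ hσ) (gm τ hτ)
    (gb σ bσ) (gb τ bτ) hdiff hs (fun _ => 1) measurable_const (by simp)
  simp only [mul_one] at this
  calc |Qen J σ - Qen J τ| ≤ _ := this
    _ = _ := by ring

variable {d L : ℕ} [hLF : Fact ((0:ℝ) < L)]

/-- number of occupied sites in a coarse cube. -/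
noncomputable def Ncnt {k ℓ : ℕ} (h : ℓ ≤ k) (s : ConfigSpace d L k) (c : Site d L ℓ) : ℕ :=
  (Finset.univ.filter fun p => cidx h p = c ∧ s p = true).card

lemma Ncnt_le {k ℓ : ℕ} (h : ℓ ≤ k) (s : ConfigSpace d L k) (c : Site d L ℓ) :
    Ncnt h s c ≤ 2 ^ (d * (k - ℓ)) := by
  rw [← fiber_card h c]
  apply Finset.card_le_card
  intro p hp
  simp only [Finset.mem_filter, Finset.mem_univ, true_and] at hp ⊢
  exact hp.1

lemma sum_spin {ι : Type*} (t : Finset ι) (s : ι → Bool) :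
    ∑ p ∈ t, spin (s p) = 2 * ((t.filter fun p => s p = true).card : ℝ) - t.card := by
  have : ∀ b : Bool, spin b = 2 * (if b = true then (1:ℝ) else 0) - 1 := by
    intro b; cases b <;> simp [spin]; norm_num
  simp_rw [this]
  rw [Finset.sum_sub_distrib, ← Finset.mul_sum, Finset.sum_boole]
  simp

lemma gam_rel {k ℓ : ℕ} (h : ℓ ≤ k) :
    gam ℓ ^ d = gam k ^ d * ((2 ^ (d * (k - ℓ)) : ℕ) : ℝ) := by
  have h3 : gam ℓ = gam k * 2 ^ (k - ℓ) := by
    unfold gam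
    rw [← zpow_natCast, ← zpow_add₀ (by norm_num)]
    congr 1
    omega
  rw [h3, mul_pow, ← pow_mul, mul_comm (k - ℓ) d]
  push_cast
  ring

lemma gam_sites (ℓ : ℕ) : gam ℓ ^ d * (Fintype.card (Site d L ℓ) : ℝ) = (L:ℝ) ^ d := by
  have := integral_site (d := d) (L := L) ℓ (fun _ => (1:ℝ))
  simp only [integral_const, smul_eq_mul, mul_one, Finset.sum_const, Finset.card_univ,
    nsmul_eq_mul] at this
  rw [← this, vol_torus]

lemma cellAvg_step {k ℓ : ℕ} (h : ℓ ≤ k) (s : ConfigSpace d L k) (c : Site d L ℓ) :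
    cellAvg ℓ (stepFun L k s) c =
      (2 * (Ncnt h s c : ℝ) - ((2 ^ (d * (k - ℓ)) : ℕ) : ℝ)) / ((2 ^ (d * (k - ℓ)) : ℕ) : ℝ) := by
  have hI : ∫ y in {y : Torus d L | siteOf L ℓ y = c}, stepFun L k s y =
      gam k ^ d * (2 * (Ncnt h s c : ℝ) - ((2 ^ (d * (k - ℓ)) : ℕ) : ℝ)) := by
    rw [← integral_indicator (siteSet_meas ℓ c)]
    have h1 : ∀ y : Torus d L, Set.indicator {y : Torus d L | siteOf L ℓ y = c} (stepFun L k s) y =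
        (fun p => if cidx h p = c then spin (s p) else 0) (siteOf L k y) := by
      intro y
      simp only [Set.indicator, Set.mem_ofPred_eq, siteOf_cidx h, stepFun]
    simp_rw [h1]
    rw [integral_site k (fun p => if cidx h p = c then spin (s p) else 0)]
    congr 1
    rw [← Finset.sum_filter, sum_spin, fiber_card, Finset.filter_filter]
    rfl
  unfold cellAvg
  rw [hI, gam_rel h]
  have := pow_pos (gam_pos k) d
  field_simp

lemma coarse_iff {k ℓ : ℕ} (h : ℓ ≤ k) (s s' : ConfigSpace d L k) :
    coarse L ℓ (stepFun L k s) = coarse L ℓ (stepFun L k s') ↔ Ncnt h s = Ncnt h s' := by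
  have hn : (0:ℝ) < ((2 ^ (d * (k - ℓ)) : ℕ) : ℝ) := by positivity
  constructor
  · intro he
    funext c
    obtain ⟨x, rfl⟩ := siteOf_surj ℓ c
    have := congrFun he x
    rw [coarse_eq, coarse_eq, cellAvg_step h, cellAvg_step h, div_left_inj' hn.ne'] at this
    have h2 : (Ncnt h s (siteOf L ℓ x) : ℝ) = Ncnt h s' (siteOf L ℓ x) := by linarith
    exact_mod_cast h2
  · intro he
    funext x
    rw [coarse_eq, coarse_eq, cellAvg_step h, cellAvg_step h, he]

lemma numOnes_eq {k ℓ : ℕ} (h : ℓ ≤ k) (s : ConfigSpace d L k) :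
    numOnes L k s = ∑ c : Site d L ℓ, Ncnt h s c := by
  unfold numOnes Ncnt
  rw [Finset.card_eq_sum_card_fiberwise (f := cidx h) (t := Finset.univ) (by simp)]
  refine Finset.sum_congr rfl fun c _ => ?_
  congr 1
  ext p
  simp [and_comm]

lemma int_coarse (n : ℕ) (f : Torus d L → ℝ) (hf : Integrable f) :
    ∫ x, coarse L n f x = ∫ x, f x := by
  simp_rw [coarse_eq]
  rw [integral_site n (cellAvg n f)]
  have := integral_site_mul n (fun _ => (1:ℝ)) f hf
  simp only [one_mul] at this
  rw [this, Finset.mul_sum]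
  refine Finset.sum_congr rfl fun p _ => ?_
  unfold cellAvg
  have := pow_pos (gam_pos n) d
  field_simp

lemma int_coarse_step (k ℓ : ℕ) (s : ConfigSpace d L k) :
    ∫ x, coarse L ℓ (stepFun L k s) x =
      gam k ^ d * (2 * (numOnes L k s : ℝ) - Fintype.card (Site d L k)) := by
  rw [int_coarse ℓ _ (int_of_bdd _ (step_meas k s) (step_bdd k s))]
  unfold stepFun
  rw [integral_site k (fun p => spin (s p)), sum_spin]
  rfl

lemma mean_iff (k ℓ : ℕ) (s : ConfigSpace d L k) (Np : ℕ) (m : ℝ)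
    (hm : m = 2 * (Np:ℝ) / (2 ^ (d * k) * (L:ℝ) ^ d) - 1) :
    ((L:ℝ) ^ (-(d:ℤ)) * ∫ r, coarse L ℓ (stepFun L k s) r) = m ↔ numOnes L k s = Np := by
  have hL : (0:ℝ) < L := hLF.out
  have hg : gam k ^ d * 2 ^ (d * k) = 1 := by
    unfold gam
    rw [zpow_neg, zpow_natCast, mul_comm d k, pow_mul, ← mul_pow]
    have : ((2:ℝ) ^ k)⁻¹ * 2 ^ k = 1 := by field_simp
    rw [this, one_pow]
  have hs := gam_sites (d := d) (L := L) k
  have hc : gam k ^ d = 1 / 2 ^ (d * k) := by field_simp; linarith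
  rw [int_coarse_step, hm, mul_sub, hs, zpow_neg, zpow_natCast, hc]
  have e : ((L:ℝ) ^ d)⁻¹ * (1 / 2 ^ (d * k) * (2 * (numOnes L k s : ℝ)) - (L:ℝ) ^ d) =
      2 * (numOnes L k s : ℝ) / (2 ^ (d * k) * (L:ℝ) ^ d) - 1 := by
    field_simp
  rw [e, sub_left_inj, div_left_inj' (by positivity)]
  constructor
  · intro h
    have : (numOnes L k s : ℝ) = Np := by linarith
    exact_mod_cast this
  · intro h; rw [h]

lemma int_ient_coarse (n : ℕ) (f : Torus d L → ℝ) :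
    ∫ x, ient (coarse L n f x) = gam n ^ d * ∑ c, ient (cellAvg n f c) := by
  simp_rw [coarse_eq]
  exact integral_site n (fun c => ient (cellAvg n f c))

lemma jensen (n : ℕ) (σ : Torus d L → ℝ) (hσ : Measurable σ) (hb : ∀ x, |σ x| ≤ 1) :
    ∫ x, ient (coarse L n σ x) ≤ ∫ x, ient (σ x) := by
  have hint : Integrable (fun x => ient (σ x)) := by
    obtain ⟨C, hC⟩ := isCompact_Icc.exists_bound_of_continuousOn (s := Set.Icc (-1:ℝ) 1)
      ient_cont.continuousOn
    refine Integrable.of_bound (ient_cont.measurable.comp hσ).aestronglyMeasurable C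
      (Filter.Eventually.of_forall fun x => hC _ (abs_le.1 (hb x)))
  rw [int_ient_coarse]
  have := integral_site_mul n (fun _ => (1:ℝ)) _ hint
  simp only [one_mul] at this
  rw [this, Finset.mul_sum]
  refine Finset.sum_le_sum fun c _ => ?_
  have hg := pow_pos (gam_pos n) d
  have hv := vol_site (d := d) (L := L) n c
  have hJ := ient_convex.map_set_average_le (μ := volume) (t := {x : Torus d L | siteOf L n x = c})
    (f := σ) ient_cont.continuousOn isClosed_Icc
    (by intro h0; rw [measureReal_def, h0] at hv; simp at hv; linarith)
    (measure_ne_top _ _) (Filter.Eventually.of_forall fun x => abs_le.1 (hb x))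
    (int_of_bdd σ hσ hb).integrableOn hint.integrableOn
  rw [setAverage_eq, setAverage_eq, hv, smul_eq_mul, smul_eq_mul] at hJ
  have e : cellAvg n σ c = (gam n ^ d)⁻¹ * ∫ x in {x : Torus d L | siteOf L n x = c}, σ x := by
    unfold cellAvg; rw [div_eq_inv_mul]
  rw [e]
  calc gam n ^ d * _ ≤ gam n ^ d * _ := mul_le_mul_of_nonneg_left hJ hg.le
    _ = _ := by field_simp

end PartD


section PartE

variable {d L : ℕ} [hLF : Fact ((0:ℝ) < L)]

lemma gam_anti {k ℓ : ℕ} (h : ℓ ≤ k) : gam k ≤ gam ℓ := by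
  unfold gam
  exact zpow_le_zpow_right₀ (by norm_num) (by omega)

lemma coarse_energy (J : ℝ → ℝ) (C : ℝ) (n : ℕ)
    (hC : ∀ (n : ℕ) (σ : Torus d L → ℝ), Measurable σ →
      (∀ x, |σ x| ≤ 1) → |Qen J σ - Qd J n σ| ≤ C * (L:ℝ) ^ d * gam n)
    (σ : Torus d L → ℝ) (hσ : Measurable σ) (hb : ∀ x, |σ x| ≤ 1) :
    |Qen J (coarse L n σ) - Qen J σ| ≤ 2 * (C * (L:ℝ) ^ d * gam n) := by
  have h1 := abs_le.1 (hC n σ hσ hb)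
  have h2 := abs_le.1 (hC n _ (coarse_meas n σ) (coarse_bdd n σ hb))
  rw [Qd_coarse J n σ hσ hb] at h2
  rw [abs_le]
  constructor <;> linarith [h1.1, h1.2, h2.1, h2.2]

lemma ham_bound (J : ℝ → ℝ) (C : ℝ) (hC0 : 0 ≤ C) {k ℓ : ℕ} (h : ℓ ≤ k)
    (hC : ∀ (n : ℕ) (σ : Torus d L → ℝ), Measurable σ →
      (∀ x, |σ x| ≤ 1) → |Qen J σ - Qd J n σ| ≤ C * (L:ℝ) ^ d * gam n)
    (s : ConfigSpace d L k) :
    |gam k ^ d * Ham L k J s + 1 / 2 * Qen J (coarse L ℓ (stepFun L k s))| ≤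
      2 * (C * (L:ℝ) ^ d * gam ℓ) := by
  have h1 := abs_le.1 (coarse_energy J C ℓ hC _ (step_meas k s) (step_bdd k s))
  have h2 := abs_le.1 (hC k _ (step_meas k s) (step_bdd k s))
  rw [Qd_step] at h2
  have h3 : C * (L:ℝ) ^ d * gam k ≤ C * (L:ℝ) ^ d * gam ℓ :=
    mul_le_mul_of_nonneg_left (gam_anti h) (by positivity)
  have h4 : 0 ≤ C * (L:ℝ) ^ d * gam ℓ := by have := gam_pos ℓ; positivity
  rw [abs_le]
  constructor <;> linarith [h1.1, h1.2, h2.1, h2.2]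

lemma GPL_mul (β : ℝ) (hβ : 0 < β) (J : ℝ → ℝ) (σ : Torus d L → ℝ) :
    β * GPL d L β J σ = (∫ x, ient (σ x)) - β / 2 * Qen J σ := by
  unfold GPL Qen
  field_simp

lemma G_sites {k ℓ : ℕ} (h : ℓ ≤ k) : gam k ^ d * (Fintype.card (Site d L ℓ) : ℝ) =
    (L:ℝ) ^ d / ((2 ^ (d * (k - ℓ)) : ℕ) : ℝ) := by
  rw [← gam_sites (d := d) (L := L) ℓ, gam_rel h]
  have : (0:ℝ) < ((2 ^ (d * (k - ℓ)) : ℕ) : ℝ) := by positivity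
  field_simp

lemma class_card {k ℓ : ℕ} (h : ℓ ≤ k) (N : Site d L ℓ → ℕ) :
    (Finset.univ.filter fun s : ConfigSpace d L k => Ncnt h s = N).card =
      ∏ c, (2 ^ (d * (k - ℓ))).choose (N c) := by
  have h1 := card_class (cidx (d := d) (L := L) h) N
  have h2 : ∏ c, (2 ^ (d * (k - ℓ))).choose (N c) =
      ∏ c, ((Finset.univ.filter fun p => cidx (d := d) (L := L) h p = c).card).choose (N c) :=
    Finset.prod_congr rfl fun c _ => by rw [fiber_card h c]
  rw [h2]
  refine Eq.trans ?_ (h1.trans ?_)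
  · congr 1
    ext s
    simp only [Finset.mem_filter, Finset.mem_univ, true_and]
    unfold Ncnt
    rw [funext_iff]
    refine forall_congr' fun c => ?_
    refine Eq.to_iff (congrArg (· = N c) ?_)
    congr!
  · congr!

lemma class_bound (β : ℝ) (hβ : 0 < β) (J : ℝ → ℝ) (C : ℝ) (hC0 : 0 ≤ C) {k ℓ : ℕ} (h : ℓ ≤ k)
    (hC : ∀ (n : ℕ) (σ : Torus d L → ℝ), Measurable σ →
      (∀ x, |σ x| ≤ 1) → |Qen J σ - Qd J n σ| ≤ C * (L:ℝ) ^ d * gam n)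
    (s₀ : ConfigSpace d L k) :
    |gam k ^ d * Real.log (∑ s ∈ Finset.univ.filter (fun s => Ncnt h s = Ncnt h s₀),
        Real.exp (-β * Ham L k J s)) + β * GPL d L β J (coarse L ℓ (stepFun L k s₀))| ≤
      β * (2 * (C * (L:ℝ) ^ d * gam ℓ)) + (L:ℝ) ^ d / ((2 ^ (d * (k - ℓ)) : ℕ) : ℝ) *
        (2 * (1 + Real.log (((2 ^ (d * (k - ℓ)) : ℕ) : ℝ) + 1))) := by
  have hrel := gam_rel (d := d) h
  have hav := cellAvg_step (d := d) (L := L) h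
  have hle := Ncnt_le (d := d) (L := L) h
  have hcc := class_card (d := d) (L := L) h
  have hGs := G_sites (d := d) (L := L) h
  generalize hn : 2 ^ (d * (k - ℓ)) = n at *
  have hn0 : 0 < n := by rw [← hn]; positivity
  set G := gam k ^ d with hGdef
  have hG : 0 < G := pow_pos (gam_pos k) d
  set T := Finset.univ.filter (fun s : ConfigSpace d L k => Ncnt h s = Ncnt h s₀) with hT
  set e := β * (2 * (C * (L:ℝ) ^ d * gam ℓ)) with he
  set q := β / 2 * Qen J (coarse L ℓ (stepFun L k s₀)) with hq
  have hTne : T.Nonempty := ⟨s₀, by simp [hT]⟩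
  have hcard : (0:ℝ) < (T.card : ℝ) := by exact_mod_cast hTne.card_pos
  have hH : ∀ s ∈ T, |G * (-β * Ham L k J s) - q| ≤ e := by
    intro s hs
    have h1 : Ncnt h s = Ncnt h s₀ := by simpa [hT] using hs
    have h2 := ham_bound J C hC0 h hC s
    rw [(coarse_iff h s s₀).2 h1] at h2
    have h3 : G * (-β * Ham L k J s) - q = -(β * (G * Ham L k J s +
        1 / 2 * Qen J (coarse L ℓ (stepFun L k s₀)))) := by rw [hq]; ring
    rw [h3, abs_neg, abs_mul, abs_of_pos hβ]
    exact mul_le_mul_of_nonneg_left h2 hβ.le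
  -- entropy
  have hent : |G * Real.log T.card + ∫ x, ient (coarse L ℓ (stepFun L k s₀) x)| ≤
      (L:ℝ) ^ d / n * (2 * (1 + Real.log ((n:ℝ) + 1))) := by
    rw [hT, hcc, int_ient_coarse, hrel, ← hGs, Nat.cast_prod]
    rw [Real.log_prod (fun c _ => by
      exact_mod_cast (Nat.choose_pos (hle s₀ c)).ne')]
    have e1 : G * ∑ c, Real.log ((n.choose (Ncnt h s₀ c) : ℕ) : ℝ) +
        G * (n:ℝ) * ∑ c, ient (cellAvg ℓ (stepFun L k s₀) c) =
        G * ∑ c, (Real.log ((n.choose (Ncnt h s₀ c) : ℕ) : ℝ) +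
          n * ient ((2 * (Ncnt h s₀ c : ℝ) - n) / n)) := by
      rw [Finset.sum_add_distrib, mul_add, ← Finset.mul_sum]
      simp_rw [hav]
      ring
    refine (le_of_eq (congrArg abs ?_)).trans ((abs_mul G (∑ c, (Real.log ((n.choose (Ncnt h s₀ c) : ℕ) : ℝ) +
          n * ient ((2 * (Ncnt h s₀ c : ℝ) - n) / n)))).le.trans ?_)
    · exact e1
    · rw [abs_of_pos hG, mul_assoc]
      refine mul_le_mul_of_nonneg_left ?_ hG.le
      refine (Finset.abs_sum_le_sum_abs _ _).trans ?_
      refine (Finset.sum_le_card_nsmul _ _ _ fun c _ => log_choose n _ hn0 (hle s₀ c)).trans ?_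
      rw [nsmul_eq_mul, Finset.card_univ]
  -- sums
  have hup : ∑ s ∈ T, Real.exp (-β * Ham L k J s) ≤ T.card * Real.exp ((q + e) / G) := by
    rw [← nsmul_eq_mul]
    refine Finset.sum_le_card_nsmul _ _ _ fun s hs => ?_
    rw [Real.exp_le_exp, le_div_iff₀ hG]
    linarith [(abs_le.1 (hH s hs)).2]
  have hlo : T.card * Real.exp ((q - e) / G) ≤ ∑ s ∈ T, Real.exp (-β * Ham L k J s) := by
    rw [← nsmul_eq_mul]
    refine Finset.card_nsmul_le_sum _ _ _ fun s hs => ?_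
    rw [Real.exp_le_exp, div_le_iff₀ hG]
    linarith [(abs_le.1 (hH s hs)).1]
  have hSpos : 0 < ∑ s ∈ T, Real.exp (-β * Ham L k J s) :=
    Finset.sum_pos (fun s _ => Real.exp_pos _) hTne
  have l1 := mul_le_mul_of_nonneg_left (Real.log_le_log hSpos hup) hG.le
  have l2 := mul_le_mul_of_nonneg_left (Real.log_le_log (by positivity) hlo) hG.le
  rw [Real.log_mul hcard.ne' (Real.exp_pos _).ne', Real.log_exp, mul_add,
    mul_div_cancel₀ _ hG.ne'] at l1 l2
  rw [GPL_mul β hβ, ← hq]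
  have l3 := abs_le.1 hent
  rw [abs_le]
  constructor <;> linarith [l3.1, l3.2]

lemma rounding_bound (β : ℝ) (hβ : 0 < β) (J : ℝ → ℝ) (C C2 : ℝ) {k ℓ : ℕ} (h : ℓ ≤ k)
    (hC : ∀ (n : ℕ) (σ : Torus d L → ℝ), Measurable σ →
      (∀ x, |σ x| ≤ 1) → |Qen J σ - Qd J n σ| ≤ C * (L:ℝ) ^ d * gam n)
    (hC2 : ∀ (σ τ : Torus d L → ℝ), Measurable σ →
      Measurable τ → (∀ x, |σ x| ≤ 1) → (∀ x, |τ x| ≤ 1) → ∀ ε : ℝ, 0 ≤ ε →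
      (∀ x, |σ x - τ x| ≤ ε) → |Qen J σ - Qen J τ| ≤ C2 * (L:ℝ) ^ d * ε)
    (Np : ℕ) (m : ℝ) (hm : m = 2 * (Np:ℝ) / (2 ^ (d * k) * (L:ℝ) ^ d) - 1)
    (σ : Torus d L → ℝ) (hσ : Measurable σ) (hb : ∀ x, |σ x| ≤ 1)
    (hmean : ((L:ℝ) ^ (-(d:ℤ)) * ∫ r, σ r) = m) :
    ∃ s : ConfigSpace d L k, numOnes L k s = Np ∧
      β * GPL d L β J (coarse L ℓ (stepFun L k s)) ≤ β * GPL d L β J σ +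
        ((L:ℝ) ^ d * (2 * ((1 + Real.log ((2 ^ (d * (k - ℓ)) : ℕ) : ℝ)) /
          ((2 ^ (d * (k - ℓ)) : ℕ) : ℝ))) +
        β / 2 * (C2 * (L:ℝ) ^ d * (2 / ((2 ^ (d * (k - ℓ)) : ℕ) : ℝ)) +
          2 * (C * (L:ℝ) ^ d * gam ℓ))) := by
  have hL : (0:ℝ) < L := hLF.out
  have hrel := gam_rel (d := d) h
  have hav := cellAvg_step (d := d) (L := L) h
  have hle := Ncnt_le (d := d) (L := L) h
  have hcc := class_card (d := d) (L := L) h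
  generalize hn : 2 ^ (d * (k - ℓ)) = n at *
  have hn0 : 0 < n := by rw [← hn]; positivity
  have hnR : (0:ℝ) < n := by exact_mod_cast hn0
  have hg := pow_pos (gam_pos k) d
  set a : Site d L ℓ → ℝ := cellAvg ℓ σ with ha
  have hab : ∀ c, |a c| ≤ 1 := cellAvg_bdd ℓ σ hb
  obtain ⟨N, hN, hNs⟩ := rounding n (fun c : Site d L ℓ => n * ((1 + a c) / 2))
    (fun c => by have := (abs_le.1 (hab c)).1
                 have : 0 ≤ (1 + a c) / 2 := by linarith
                 positivity)
    (fun c => by have := (abs_le.1 (hab c)).2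
                 have : (1 + a c) / 2 ≤ 1 := by linarith
                 nlinarith) Finset.univ
  have hsum : ∑ c : Site d L ℓ, (n:ℝ) * ((1 + a c) / 2) = Np := by
    have i1 : ∫ x, σ x = gam ℓ ^ d * ∑ c, a c := by
      rw [← int_coarse ℓ σ (int_of_bdd σ hσ hb)]
      simp_rw [coarse_eq]
      rw [integral_site ℓ (cellAvg ℓ σ)]
    have i2 : ∫ x, σ x = m * (L:ℝ) ^ d := by
      rw [← hmean, zpow_neg, zpow_natCast]; field_simp
    have i3 := gam_sites (d := d) (L := L) ℓ
    have hgk : gam k ^ d * 2 ^ (d * k) = 1 := by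
      unfold gam
      rw [zpow_neg, zpow_natCast, mul_comm d k, pow_mul, ← mul_pow]
      have : ((2:ℝ) ^ k)⁻¹ * 2 ^ k = 1 := by field_simp
      rw [this, one_pow]
    have i4 : ∑ c : Site d L ℓ, (n:ℝ) * ((1 + a c) / 2) =
        n / 2 * (Fintype.card (Site d L ℓ)) + n / 2 * ∑ c, a c := by
      have : ∀ c, (n:ℝ) * ((1 + a c) / 2) = n / 2 + n / 2 * a c := fun c => by ring
      simp_rw [this]
      rw [Finset.sum_add_distrib, ← Finset.mul_sum]
      simp [mul_comm]
    rw [i4]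
    apply mul_left_cancel₀ hg.ne'
    have i5 : gam k ^ d * (n / 2 * (Fintype.card (Site d L ℓ)) + n / 2 * ∑ c, a c) =
        (1/2) * (gam ℓ ^ d * (Fintype.card (Site d L ℓ))) + (1/2) * (gam ℓ ^ d * ∑ c, a c) := by
      rw [hrel]; ring
    rw [i5, i3, ← i1, i2, hm]
    have i6 : gam k ^ d = 1 / 2 ^ (d * k) := by field_simp; linarith
    rw [i6]
    field_simp
    ring
  rw [hsum] at hNs
  have hNp : ∑ c, N c = Np := by
    rw [Int.floor_natCast] at hNs
    exact_mod_cast hNs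
  have hex : (Finset.univ.filter fun s : ConfigSpace d L k => Ncnt h s = N).Nonempty := by
    rw [← Finset.card_pos, hcc]
    exact Finset.prod_pos fun c _ => Nat.choose_pos (hN c (Finset.mem_univ c)).1
  obtain ⟨s, hs⟩ := hex
  have hsN : Ncnt h s = N := by simpa using hs
  refine ⟨s, by rw [numOnes_eq h, hsN, hNp], ?_⟩
  have hlogn : 0 ≤ Real.log n := Real.log_nonneg (by exact_mod_cast hn0)
  -- entropy
  have hent : ∫ x, ient (coarse L ℓ (stepFun L k s) x) ≤ (∫ x, ient (σ x)) +
      (L:ℝ) ^ d * (2 * ((1 + Real.log n) / n)) := by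
    have j := jensen ℓ σ hσ hb
    rw [int_ient_coarse] at j ⊢
    have hgl := pow_pos (gam_pos ℓ) d
    have e1 : ∑ c, ient (cellAvg ℓ (stepFun L k s) c) ≤
        ∑ c, (ient (a c) + 2 * ((1 + Real.log n) / n)) := by
      refine Finset.sum_le_sum fun c _ => ?_
      rw [hav s c, hsN]
      exact ient_mod n (N c) hn0 (hN c (Finset.mem_univ c)).1 (a c) (hab c)
        (hN c (Finset.mem_univ c)).2
    rw [Finset.sum_add_distrib, Finset.sum_const, Finset.card_univ, nsmul_eq_mul] at e1
    have e2 := mul_le_mul_of_nonneg_left e1 hgl.le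
    rw [mul_add, ← mul_assoc, gam_sites] at e2
    linarith
  have hQ1 := hC2 (coarse L ℓ (stepFun L k s)) (coarse L ℓ σ) (coarse_meas _ _) (coarse_meas _ _)
    (coarse_bdd _ _ (step_bdd k s)) (coarse_bdd _ _ hb) (2 / n) (by positivity) (by
      intro x
      rw [coarse_eq, coarse_eq, hav s, hsN]
      have e1 := (hN (siteOf L ℓ x) (Finset.mem_univ _)).2
      have e2 : (2 * (N (siteOf L ℓ x) : ℝ) - n) / n - cellAvg ℓ σ (siteOf L ℓ x) =
          2 / n * ((N (siteOf L ℓ x) : ℝ) - n * ((1 + a (siteOf L ℓ x)) / 2)) := by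
        rw [ha]; field_simp; ring
      rw [e2, abs_mul, abs_of_pos (by positivity : (0:ℝ) < 2 / n)]
      exact mul_le_of_le_one_right (by positivity) e1)
  have hQ2 := coarse_energy J C ℓ hC σ hσ hb
  rw [GPL_mul β hβ, GPL_mul β hβ]
  have hQ3 : -(Qen J (coarse L ℓ (stepFun L k s)) - Qen J σ) ≤
      C2 * (L:ℝ) ^ d * (2 / n) + 2 * (C * (L:ℝ) ^ d * gam ℓ) := by
    linarith [(abs_le.1 hQ1).1, (abs_le.1 hQ2).1]
  have hQ4 := mul_le_mul_of_nonneg_left hQ3 (by positivity : 0 ≤ β / 2)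
  linarith

end PartE


section PartF

variable {d L : ℕ} [hLF : Fact ((0:ℝ) < L)]

lemma image_card {k ℓ : ℕ} (h : ℓ ≤ k) (A : Finset (ConfigSpace d L k)) :
    ((A.image (Ncnt h)).card : ℝ) ≤
      (((2 ^ (d * (k - ℓ)) : ℕ) : ℝ) + 1) ^ (Fintype.card (Site d L ℓ)) := by
  have h1 : A.image (Ncnt h) ⊆
      Fintype.piFinset (fun _ : Site d L ℓ => Finset.range (2 ^ (d * (k - ℓ)) + 1)) := by
    intro N hN
    obtain ⟨s, -, rfl⟩ := Finset.mem_image.1 hN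
    rw [Fintype.mem_piFinset]
    intro c
    rw [Finset.mem_range]
    exact Nat.lt_succ_of_le (Ncnt_le h s c)
  have h2 := Finset.card_le_card h1
  rw [Fintype.card_piFinset] at h2
  simp only [Finset.card_range, Finset.prod_const, Finset.card_univ] at h2
  exact_mod_cast h2

lemma family_sum' {S T : Type*} [Fintype S] [DecidableEq T] (N : S → T) (w F : S → ℝ)
    (hw : ∀ s, 0 < w s)
    (G E b K : ℝ) (hG : 0 < G) (hK : 1 ≤ K)
    (hW : ∀ s₀, |G * Real.log (∑ s ∈ Finset.univ.filter (fun s => N s = N s₀), w s) + F s₀ + b| ≤ E)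
    (A : Finset S) (hA : A.Nonempty) (hc : ((A.image N).card : ℝ) ≤ K) :
    |G * Real.log (∑ s ∈ Finset.univ.filter (fun s => ∃ s₀ ∈ A, N s = N s₀), w s)
      + A.inf' hA F + b| ≤ E + G * Real.log K := by
  have := family_sum N w F hw G E b K hG hK (fun s₀ => by convert hW s₀) A hA (by convert hc)
  convert this

lemma main_bound (β : ℝ) (hβ : 0 < β) (J : ℝ → ℝ) (C C2 : ℝ) (hC0 : 0 ≤ C) {k ℓ : ℕ} (h : ℓ ≤ k)
    (hC : ∀ (n : ℕ) (σ : Torus d L → ℝ), Measurable σ →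
      (∀ x, |σ x| ≤ 1) → |Qen J σ - Qd J n σ| ≤ C * (L:ℝ) ^ d * gam n)
    (hC2 : ∀ (σ τ : Torus d L → ℝ), Measurable σ →
      Measurable τ → (∀ x, |σ x| ≤ 1) → (∀ x, |τ x| ≤ 1) → ∀ ε : ℝ, 0 ≤ ε →
      (∀ x, |σ x - τ x| ≤ ε) → |Qen J σ - Qen J τ| ≤ C2 * (L:ℝ) ^ d * ε)
    (Np : ℕ) (m : ℝ) (hm : m = 2 * (Np:ℝ) / (2 ^ (d * k) * (L:ℝ) ^ d) - 1)
    (σs : Torus d L → ℝ) (hσ : Measurable σs) (hb : ∀ x, |σs x| ≤ 1)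
    (hmean : ((L:ℝ) ^ (-(d:ℤ)) * ∫ r, σs r) = m)
    (hmin : ∀ σ : Torus d L → ℝ, Measurable σ → (∀ x, σ x ∈ Set.Icc (-1:ℝ) 1) →
          ((L:ℝ) ^ (-(d:ℤ)) * ∫ r, σ r) = m → GPL d L β J σs ≤ GPL d L β J σ)
    (A : Finset (ConfigSpace d L k)) (hA : A.Nonempty)
    (hAm : ∀ s₀ ∈ A, ((L:ℝ) ^ (-(d:ℤ)) * ∫ r, coarse L ℓ (stepFun L k s₀) r) = m)
    (nn : ℝ) (hnn : nn = ((2 ^ (d * (k - ℓ)) : ℕ) : ℝ)) :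
    |(gam k) ^ d *
              Real.log (Pcan L k β J Np
                {s | ∃ s₀ ∈ A, coarse L ℓ (stepFun L k s) = coarse L ℓ (stepFun L k s₀)})
            + A.inf' hA (fun s₀ =>
                β * (GPL d L β J (coarse L ℓ (stepFun L k s₀)) - GPL d L β J σs))| ≤
      2 * (β * (2 * (C * (L:ℝ) ^ d * gam ℓ)) + (L:ℝ) ^ d / nn * (2 * (1 + Real.log (nn + 1))) +
        (L:ℝ) ^ d / nn * Real.log (nn + 1)) +
      ((L:ℝ) ^ d * (2 * ((1 + Real.log nn) / nn)) +
        β / 2 * (C2 * (L:ℝ) ^ d * (2 / nn) + 2 * (C * (L:ℝ) ^ d * gam ℓ))) := by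
  have hcb := class_bound β hβ J C hC0 h hC
  have hrb := rounding_bound β hβ J C C2 h hC hC2 Np m hm σs hσ hb hmean
  have hic := image_card (d := d) (L := L) h
  have hGs := G_sites (d := d) (L := L) h
  rw [← hnn] at hGs hrb
  simp_rw [← hnn] at hcb hic
  have hnn1 : 0 ≤ nn := by rw [hnn]; positivity
  set F : ConfigSpace d L k → ℝ := fun s₀ =>
    β * (GPL d L β J (coarse L ℓ (stepFun L k s₀)) - GPL d L β J σs) with hF
  set E1 := β * (2 * (C * (L:ℝ) ^ d * gam ℓ)) + (L:ℝ) ^ d / nn * (2 * (1 + Real.log (nn + 1)))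
    with hE1
  set w : ConfigSpace d L k → ℝ := fun s => Real.exp (-β * Ham L k J s) with hw
  have hG : 0 < gam k ^ d := pow_pos (gam_pos k) d
  have hfs := family_sum' (Ncnt (d := d) (L := L) h) w F (fun s => Real.exp_pos _) (gam k ^ d) E1
    (β * GPL d L β J σs) ((nn + 1) ^ (Fintype.card (Site d L ℓ))) hG
    (one_le_pow₀ (by linarith)) (fun s₀ => by
      have := hcb s₀
      have e : F s₀ + β * GPL d L β J σs = β * GPL d L β J (coarse L ℓ (stepFun L k s₀)) := by
        simp only [hF]; ring
      rw [add_assoc, e]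
      exact this)
  have hKK : gam k ^ d * Real.log ((nn + 1) ^ (Fintype.card (Site d L ℓ))) =
      (L:ℝ) ^ d / nn * Real.log (nn + 1) := by
    rw [Real.log_pow, ← mul_assoc, hGs]
  rw [hKK] at hfs
  have hAN : ∀ s₀ ∈ A, numOnes L k s₀ = Np := fun s₀ hs =>
    (mean_iff k ℓ s₀ Np m hm).1 (hAm s₀ hs)
  set A0 := Finset.univ.filter (fun s : ConfigSpace d L k => numOnes L k s = Np) with hA0
  have hA0ne : A0.Nonempty := by
    obtain ⟨s, hs⟩ := hA
    exact ⟨s, by simp [hA0, hAN s hs]⟩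
  have f1 := hfs A hA (hic A)
  have f2 := hfs A0 hA0ne (hic A0)
  have n1 : (Finset.univ.filter
      (fun s : ConfigSpace d L k => s ∈ {s | ∃ s₀ ∈ A, coarse L ℓ (stepFun L k s) =
        coarse L ℓ (stepFun L k s₀)} ∧ numOnes L k s = Np)) =
      Finset.univ.filter (fun s => ∃ s₀ ∈ A, Ncnt h s = Ncnt h s₀) := by
    ext s
    simp only [Finset.mem_filter, Finset.mem_univ, true_and, Set.mem_ofPred_eq, coarse_iff h]
    constructor
    · exact fun hh => hh.1
    · rintro ⟨s₀, hs₀, he⟩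
      refine ⟨⟨s₀, hs₀, he⟩, ?_⟩
      rw [← hAN s₀ hs₀, numOnes_eq h, numOnes_eq h, he]
  have n2 : Finset.univ.filter (fun s => ∃ s₀ ∈ A0, Ncnt h s = Ncnt h s₀) = A0 := by
    ext s
    simp only [hA0, Finset.mem_filter, Finset.mem_univ, true_and]
    constructor
    · rintro ⟨s₀, hs₀, he⟩
      rw [← hs₀, numOnes_eq h, numOnes_eq h, he]
    · exact fun hh => ⟨s, hh, rfl⟩
  rw [n2] at f2
  have p1 : 0 < ∑ s ∈ Finset.univ.filter (fun s => ∃ s₀ ∈ A, Ncnt h s = Ncnt h s₀), w s :=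
    Finset.sum_pos (fun s _ => Real.exp_pos _) (by
      obtain ⟨s, hs⟩ := hA
      exact ⟨s, by simp only [Finset.mem_filter, Finset.mem_univ, true_and]; exact ⟨s, hs, rfl⟩⟩)
  have p2 : 0 < ∑ s ∈ A0, w s := Finset.sum_pos (fun s _ => Real.exp_pos _) hA0ne
  have hP : Pcan L k β J Np
      {s | ∃ s₀ ∈ A, coarse L ℓ (stepFun L k s) = coarse L ℓ (stepFun L k s₀)} =
      (∑ s ∈ Finset.univ.filter (fun s => ∃ s₀ ∈ A, Ncnt h s = Ncnt h s₀), w s) /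
        ∑ s ∈ A0, w s := by
    unfold Pcan
    rw [← n1]
    simp only [hw, hA0]
    congr!
  rw [hP, Real.log_div p1.ne' p2.ne', mul_sub]
  have g1 : 0 ≤ A0.inf' hA0ne F := by
    refine Finset.le_inf' _ _ fun s hs => ?_
    have hs' : numOnes L k s = Np := by simpa [hA0] using hs
    have := hmin (coarse L ℓ (stepFun L k s)) (coarse_meas _ _)
      (fun x => abs_le.1 (coarse_bdd _ _ (step_bdd k s) x)) ((mean_iff k ℓ s Np m hm).2 hs')
    exact mul_nonneg hβ.le (by linarith)
  obtain ⟨s, hs, hsb⟩ := hrb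
  have g2 : A0.inf' hA0ne F ≤ F s := Finset.inf'_le _ (by simp [hA0, hs])
  have g3 : F s = β * GPL d L β J (coarse L ℓ (stepFun L k s)) - β * GPL d L β J σs := by
    rw [hF]; ring
  rw [abs_le] at f1 f2 ⊢
  constructor <;> linarith [f1.1, f1.2, f2.1, f2.2]

lemma gam_rpow (k ℓ : ℕ) (hk : 0 < k) : gam k ^ ((ℓ:ℝ) / (k:ℝ)) = gam ℓ := by
  unfold gam
  have hk' : (k:ℝ) ≠ 0 := by positivity
  rw [← Real.rpow_intCast, ← Real.rpow_intCast, ← Real.rpow_mul (by norm_num)]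
  congr 1
  push_cast
  field_simp

lemma gam_rpow' (d k ℓ : ℕ) (hk : 0 < k) (h : ℓ ≤ k) :
    gam k ^ ((d:ℝ) * (1 - (ℓ:ℝ) / (k:ℝ))) = 1 / ((2 ^ (d * (k - ℓ)) : ℕ) : ℝ) := by
  unfold gam
  have hk' : (k:ℝ) ≠ 0 := by positivity
  rw [← Real.rpow_intCast, ← Real.rpow_mul (by norm_num)]
  push_cast
  rw [one_div, ← Real.rpow_natCast, ← Real.rpow_neg (by norm_num)]
  congr 1
  push_cast [Nat.cast_sub h]
  field_simp

end PartF

/-- **Canonical large deviations for families of coarse-grained configurations**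
(Theorem `propos1`, second part): let `m = 2N_p/(2^{dk}L^d) − 1` and let `σ*` be a Lipschitz
(constant `Λ`) constrained minimizer of `F` over measurable `σ : T_L → [−1,1]` with mean `m`.
There is a constant `c > 0`, depending only on `d`, `β`, `J` and `Λ`, such that for every
nonempty family `𝒜` of coarse-grained configurations with mean `m`,
`| γ^d log P_{can,N_p}(∪_{σ_δ∈𝒜} E(σ_δ)) + inf_{σ∈𝒜} β (F(σ) − F(σ*)) | ≤
  c L^d (γ^δ + γ^{d(1−δ)}) log(1/γ)`, where `γ = 2^{−k}` and `δ = ℓ/k`. -/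
theorem canonical_ld_family (d : ℕ) (hd : 1 ≤ d) (β : ℝ) (hβ : 1 < β)
    (J : ℝ → ℝ) (hJ : KacPotential d J) (Λ : ℝ) :
    ∃ c : ℝ, 0 < c ∧
      ∀ (L k ℓ : ℕ) [Fact ((0:ℝ) < L)], 2 ≤ L → 1 ≤ ℓ → ℓ < k →
      ∀ Np : ℕ, Np ≤ 2 ^ (d * k) * L ^ d →
      ∀ m : ℝ, m = 2 * (Np:ℝ) / (2 ^ (d * k) * (L:ℝ) ^ d) - 1 →
      ∀ σs : Torus d L → ℝ, Measurable σs → (∀ x, σs x ∈ Set.Icc (-1:ℝ) 1) →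
        ((L:ℝ) ^ (-(d:ℤ)) * ∫ r, σs r) = m →
        (∀ σ : Torus d L → ℝ, Measurable σ → (∀ x, σ x ∈ Set.Icc (-1:ℝ) 1) →
          ((L:ℝ) ^ (-(d:ℤ)) * ∫ r, σ r) = m → GPL d L β J σs ≤ GPL d L β J σ) →
        (∀ x y, |σs x - σs y| ≤ Λ * torusDist x y) →
      ∀ (A : Finset (ConfigSpace d L k)) (hA : A.Nonempty),
        (∀ s₀ ∈ A, ((L:ℝ) ^ (-(d:ℤ)) * ∫ r, coarse L ℓ (stepFun L k s₀) r) = m) →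
        |(gam k) ^ d *
              Real.log (Pcan L k β J Np
                {s | ∃ s₀ ∈ A, coarse L ℓ (stepFun L k s) = coarse L ℓ (stepFun L k s₀)})
            + A.inf' hA (fun s₀ =>
                β * (GPL d L β J (coarse L ℓ (stepFun L k s₀)) - GPL d L β J σs))|
          ≤ c * (L:ℝ) ^ d *
              (gam k ^ ((ℓ:ℝ) / (k:ℝ)) + gam k ^ ((d:ℝ) * (1 - (ℓ:ℝ) / (k:ℝ)))) *
              Real.log (1 / gam k) := by
  obtain ⟨C, hC0, hC⟩ := Qd_compare hJ
  obtain ⟨C2, hC20, hC2⟩ := Qen_lip hJ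
  have hβ0 : 0 < β := by linarith
  refine ⟨5 * β * C + β * C2 + 8 * d + 6, by positivity, ?_⟩
  intro L k ℓ hLF hL2 hℓ hℓk Np hNp m hm σs hσ hb hmean hmin _ A hA hAm
  have hk : 0 < k := by omega
  refine (main_bound β hβ0 J C C2 hC0 hℓk.le (hC L) (hC2 L) Np m hm σs hσ
    (fun x => abs_le.2 (hb x)) hmean hmin A hA hAm _ rfl).trans ?_
  rw [gam_rpow k ℓ hk, gam_rpow' d k ℓ hk hℓk.le]
  have hlam : Real.log (1 / gam k) = k * Real.log 2 := by
    unfold gam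
    rw [one_div, zpow_neg, inv_inv, zpow_natCast, Real.log_pow]
  have hl2 := Real.log_two_gt_d9
  have hlam1 : 1 ≤ Real.log (1 / gam k) := by
    rw [hlam]
    have : (2:ℝ) ≤ k := by exact_mod_cast (by omega : 2 ≤ k)
    nlinarith
  have hn1 : (1:ℝ) ≤ ((2 ^ (d * (k - ℓ)) : ℕ) : ℝ) := by
    exact_mod_cast Nat.one_le_two_pow
  have hlog : Real.log (((2 ^ (d * (k - ℓ)) : ℕ) : ℝ) + 1) ≤ d * Real.log (1 / gam k) := by
    have e1 : (((2 ^ (d * (k - ℓ)) : ℕ) : ℝ) + 1) ≤ (2:ℝ) ^ (d * k) := by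
      have e2 : 2 ^ (d * (k - ℓ)) + 2 ^ (d * (k - ℓ)) ≤ 2 ^ (d * k) := by
        rw [← two_mul, ← pow_succ']
        apply Nat.pow_le_pow_right (by norm_num)
        have : d * (k - ℓ) + d * ℓ = d * k := by rw [← mul_add]; congr 1; omega
        nlinarith
      have e3 : ((2 ^ (d * (k - ℓ)) : ℕ) : ℝ) + ((2 ^ (d * (k - ℓ)) : ℕ) : ℝ) ≤ (2:ℝ) ^ (d * k) := by
        exact_mod_cast e2
      linarith
    refine (Real.log_le_log (by positivity) e1).trans (le_of_eq ?_)
    rw [Real.log_pow, hlam]; push_cast; ring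
  have hu := gam_pos ℓ
  generalize Real.log (1 / gam k) = lam at *
  generalize ((2 ^ (d * (k - ℓ)) : ℕ) : ℝ) = n at *
  generalize gam ℓ = u at *
  have hn0 : 0 < n := by linarith
  have hlog' : Real.log n ≤ d * lam := (Real.log_le_log hn0 (by linarith)).trans hlog
  have hLd : (0:ℝ) ≤ (L:ℝ) ^ d := by positivity
  generalize (L:ℝ) ^ d = V at *
  generalize Real.log (n + 1) = a at *
  generalize Real.log n = b at *
  obtain ⟨v, hv⟩ : ∃ v, v = 1 / n := ⟨_, rfl⟩
  have hv0 : 0 ≤ v := by rw [hv]; positivity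
  have t1 : 2 * (β * (2 * (C * V * u)) + V / n * (2 * (1 + a)) + V / n * a) +
      (V * (2 * ((1 + b) / n)) + β / 2 * (C2 * V * (2 / n) + 2 * (C * V * u))) =
      V * (5 * β * C * u + v * (6 + 6 * a + 2 * b + β * C2)) := by
    rw [hv]; field_simp; ring
  rw [t1, ← hv]
  have hd0 : (0:ℝ) ≤ d := by positivity
  have t2 : 5 * β * C * u ≤ 5 * β * C * u * lam :=
    le_mul_of_one_le_right (by positivity) hlam1
  have t3 : 6 + 6 * a + 2 * b + β * C2 ≤ (6 + 8 * d + β * C2) * lam := by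
    have : 0 ≤ (6 + β * C2) * (lam - 1) := mul_nonneg (by positivity) (by linarith)
    nlinarith
  have t4 := mul_le_mul_of_nonneg_left t3 hv0
  have t5 : V * (5 * β * C * u + v * (6 + 6 * a + 2 * b + β * C2)) ≤
      V * (5 * β * C * u * lam + v * ((6 + 8 * d + β * C2) * lam)) :=
    mul_le_mul_of_nonneg_left (by linarith) hLd
  refine t5.trans ?_
  have t6 : 0 ≤ V * lam * (u * (β * C2 + 8 * d + 6) + v * (5 * β * C)) := by
    have : 0 ≤ lam := by linarith
    positivity
  linarith
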